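/- Let γ, δ₀ and the test measures be as in the planar curve setup, with x₀ = γ(0) and R = R(0). Let σ, ε : (0, δ₀] → (0, ∞) satisfy max(σ(δ), ε(δ)) ≤ δ/4 for all δ, suppose there are constants c, C' > 0 with c·δ ≤ σ(δ) ≤ C'·δ for all δ (σ = Θ(δ)), and suppose ε(δ)/δ → 0 as δ → 0⁺ (ε = o(δ)). Then lim_{δ→0⁺} −(3/σ(δ)²)·( 1 − W₁(μ_{x₀}^{σ(δ),ε(δ)}, μ_{γ(δ)}^{σ(δ),ε(δ)}) / ‖x₀ − γ(δ)‖ ) = 1/R². -/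

import Mathlib

open MeasureTheory Set Filter

/-- The 1-Wasserstein distance: infimum over couplings of the integral of the distance. -/
noncomputable def W1 {X : Type*} [MeasurableSpace X] [PseudoMetricSpace X]
    (μ ν : Measure X) : ℝ :=
  sInf { c : ℝ | ∃ π : Measure (X × X), IsProbabilityMeasure π ∧
      π.map Prod.fst = μ ∧ π.map Prod.snd = ν ∧ c = ∫ p, dist p.1 p.2 ∂π }

/-- Restriction of the ambient volume measure to a set, normalized to a probability measure. -/
noncomputable def normRestrict {X : Type*} [MeasureSpace X] (s : Set X) : Measure X :=
  (volume s)⁻¹ • volume.restrict s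

/-!
Write `T`, `N`, `κ` for the unit tangent, the rotated tangent and the signed curvature. The normal
coordinate of a point can be reparametrized along each fiber so that its density `1 - βκ` becomes
constant; both test measures are then images of the same uniform measure on a box, which couples
them. To the order that matters the points paired by this coupling are displaced parallel to the
chord from `γ 0` to `γ δ`, so the cost of the coupling is, up to `o(δ³)`, the difference of the
integrals of the linear functional `⟪·, u⟫`, where `u` is the direction of the chord. This
functional is `1`-Lipschitz, so that difference is also a lower bound for the Wasserstein distance.

It remains to compute the difference of the means. The fiber coordinate of density `1 - βκ` on
`(-σ, σ)` has mean `-κσ²/3`, and `⟪N, u⟫` decreases by `κδ` along the curve up to `o(δ)`, so the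
difference is `‖γ δ - γ 0‖ + κ²σ²δ/3 + o(δ³)`. The contribution of the width `ε = o(δ)` of the box
is absorbed in the error terms.
-/

open scoped Topology Asymptotics RealInnerProductSpace ENNReal

section Wasserstein

variable {X Ω : Type*} [MeasurableSpace X] [MeasurableSpace Ω]

theorem W1_map_le_integral_dist [PseudoMetricSpace X] [OpensMeasurableSpace (X × X)]
    {P : Measure Ω} [IsProbabilityMeasure P] {F G : Ω → X} (hF : Measurable F)
    (hG : Measurable G) :
    W1 (P.map F) (P.map G) ≤ ∫ ω, dist (F ω) (G ω) ∂P := by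
  have hFG : Measurable fun ω => (F ω, G ω) := hF.prodMk hG
  refine csInf_le ⟨0, ?_⟩ ⟨P.map fun ω => (F ω, G ω),
    Measure.isProbabilityMeasure_map hFG.aemeasurable, ?_, ?_, ?_⟩
  · rintro _ ⟨π, -, -, -, rfl⟩
    exact integral_nonneg fun _ => dist_nonneg
  · exact Measure.map_map measurable_fst hFG
  · exact Measure.map_map measurable_snd hFG
  · exact (integral_map hFG.aemeasurable
      continuous_dist.measurable.aestronglyMeasurable).symm

theorem integral_sub_integral_le_W1 [PseudoMetricSpace X] [OpensMeasurableSpace X]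
    [SecondCountableTopology X] {μ ν : Measure X} [IsProbabilityMeasure μ]
    [IsProbabilityMeasure ν] {f : X → ℝ} (hf : LipschitzWith 1 f) {x₀ : X}
    (hμ : Integrable (dist x₀) μ) (hν : Integrable (dist x₀) ν) :
    ∫ x, f x ∂ν - ∫ x, f x ∂μ ≤ W1 μ ν := by
  have integrable_of_dist {ρ : Measure X} [IsProbabilityMeasure ρ]
      (hρ : Integrable (dist x₀) ρ) : Integrable f ρ := by
    refine ((integrable_const |f x₀|).add hρ).mono' hf.continuous.aestronglyMeasurable
      (.of_forall fun x => ?_)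
    have hx : |f x - f x₀| ≤ dist x₀ x := by
      simpa [Real.dist_eq, dist_comm x₀] using hf.dist_le_mul x x₀
    calc ‖f x‖ = |f x₀ + (f x - f x₀)| := by rw [add_sub_cancel, Real.norm_eq_abs]
      _ ≤ |f x₀| + dist x₀ x := (abs_add_le _ _).trans (by gcongr)
  refine le_csInf ⟨_, μ.prod ν, inferInstance, Measure.map_fst_prod.trans (by simp),
    Measure.map_snd_prod.trans (by simp), rfl⟩ ?_
  rintro _ ⟨π, _, hfst, hsnd, rfl⟩
  have pfst : MeasurePreserving Prod.fst π μ := ⟨measurable_fst, hfst⟩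
  have psnd : MeasurePreserving Prod.snd π ν := ⟨measurable_snd, hsnd⟩
  have hdist : Integrable (fun p : X × X => dist p.1 p.2) π := by
    refine ((pfst.integrable_comp_of_integrable hμ).add
      (psnd.integrable_comp_of_integrable hν)).mono'
      continuous_dist.aestronglyMeasurable (.of_forall fun p => ?_)
    rw [Real.norm_eq_abs, abs_of_nonneg dist_nonneg]
    exact dist_triangle_left p.1 p.2 x₀
  have hf_fst : Integrable (fun p : X × X => f p.1) π :=
    pfst.integrable_comp_of_integrable (integrable_of_dist hμ)
  have hf_snd : Integrable (fun p : X × X => f p.2) π :=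
    psnd.integrable_comp_of_integrable (integrable_of_dist hν)
  calc ∫ x, f x ∂ν - ∫ x, f x ∂μ = ∫ p, (f p.2 - f p.1) ∂π := by
        rw [integral_sub hf_snd hf_fst, ← hfst, ← hsnd,
          integral_map measurable_fst.aemeasurable hf.continuous.aestronglyMeasurable,
          integral_map measurable_snd.aemeasurable hf.continuous.aestronglyMeasurable]
    _ ≤ ∫ p, dist p.1 p.2 ∂π := by
        refine integral_mono (hf_snd.sub hf_fst) hdist fun p => (le_abs_self _).trans ?_
        simpa [Real.dist_eq, dist_comm p.1] using hf.dist_le_mul p.2 p.1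

theorem abs_W1_map_sub_integral_le [NormedAddCommGroup X] [InnerProductSpace ℝ X] [BorelSpace X]
    [SecondCountableTopology X] {P : Measure Ω} [IsProbabilityMeasure P] {F G : Ω → X}
    (hF : Measurable F) (hG : Measurable G) (hFi : Integrable F P) (hGi : Integrable G P)
    {u : X} (hu : ‖u‖ = 1) {Q : Ω → ℝ} (hQ : Integrable Q P) {η : ℝ}
    (hlow : ∀ᵐ ω ∂P, Q ω - η ≤ ⟪G ω - F ω, u⟫) (hup : ∀ᵐ ω ∂P, ‖G ω - F ω‖ ≤ Q ω + η) :
    |W1 (P.map F) (P.map G) - ∫ ω, Q ω ∂P| ≤ η := by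
  have hconst : ∫ _, η ∂P = η := by simp
  have hup' : W1 (P.map F) (P.map G) ≤ ∫ ω, Q ω ∂P + η := calc
    W1 (P.map F) (P.map G) ≤ ∫ ω, dist (F ω) (G ω) ∂P := W1_map_le_integral_dist hF hG
    _ ≤ ∫ ω, (Q ω + η) ∂P := by
      simp only [dist_eq_norm_sub']
      exact integral_mono_ae (hGi.sub hFi).norm (hQ.add (integrable_const η)) hup
    _ = ∫ ω, Q ω ∂P + η := by rw [integral_add hQ (integrable_const η), hconst]
  have hlip : LipschitzWith 1 fun x : X => ⟪x, u⟫ := by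
    refine LipschitzWith.of_dist_le_mul fun x y => ?_
    rw [Real.dist_eq, ← inner_sub_left, dist_eq_norm, NNReal.coe_one, one_mul]
    simpa [hu] using abs_real_inner_le_norm (x - y) u
  have integrable_dist_map {H : Ω → X} (hH : Measurable H) (hHi : Integrable H P) :
      Integrable (dist (0 : X)) (P.map H) := by
    rw [integrable_map_measure (by fun_prop) hH.aemeasurable]
    simpa [Function.comp_def] using hHi.norm
  have := Measure.isProbabilityMeasure_map (μ := P) hF.aemeasurable
  have := Measure.isProbabilityMeasure_map (μ := P) hG.aemeasurable
  have hlow' : ∫ ω, Q ω ∂P - η ≤ W1 (P.map F) (P.map G) := calc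
    ∫ ω, Q ω ∂P - η = ∫ ω, (Q ω - η) ∂P := by rw [integral_sub hQ (integrable_const η), hconst]
    _ ≤ ∫ ω, ⟪G ω - F ω, u⟫ ∂P :=
      integral_mono_ae (hQ.sub (integrable_const η)) ((hGi.sub hFi).inner_const u) hlow
    _ = ∫ x, ⟪x, u⟫ ∂(P.map G) - ∫ x, ⟪x, u⟫ ∂(P.map F) := by
      simp only [inner_sub_left]
      rw [integral_sub (hGi.inner_const u) (hFi.inner_const u),
        integral_map hG.aemeasurable (by fun_prop), integral_map hF.aemeasurable (by fun_prop)]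
    _ ≤ W1 (P.map F) (P.map G) :=
      integral_sub_integral_le_W1 hlip (integrable_dist_map hF hFi) (integrable_dist_map hG hGi)
  exact abs_le.2 ⟨by linarith, by linarith⟩

end Wasserstein

section Fiber

/-- The integral of `β ↦ 1 - k * β` from `-σ` to `β`, shifted by `-σ` so as to fix `±σ`. With `k`
the signed curvature, `1 - k * β` is the Jacobian of the Fermi chart. -/
noncomputable def fiberCDF (σ k β : ℝ) : ℝ := β - k * (β ^ 2 - σ ^ 2) / 2

/-- The inverse of `fiberCDF σ k` on `[-σ, σ]`, rationalized so that it also covers `k = 0`. -/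
noncomputable def fiberQuantile (σ k v : ℝ) : ℝ :=
  (2 * v - k * σ ^ 2) / (1 + √(1 - 2 * k * v + k ^ 2 * σ ^ 2))

theorem hasDerivAt_fiberCDF (σ k β : ℝ) : HasDerivAt (fiberCDF σ k) (1 - k * β) β := by
  have h := (hasDerivAt_id β).sub
    ((((hasDerivAt_pow 2 β).sub_const (σ ^ 2)).const_mul k).div_const 2)
  convert! h using 1
  norm_num
  ring

theorem measurable_fiberQuantile (σ : ℝ) :
    Measurable fun p : ℝ × ℝ => fiberQuantile σ p.1 p.2 := by
  unfold fiberQuantile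
  fun_prop

theorem abs_mul_le_half {σ k β : ℝ} (hk : |k| * σ ≤ 1 / 2) (hβ : |β| ≤ σ) :
    |k * β| ≤ 1 / 2 := by
  rw [abs_mul]
  exact (mul_le_mul_of_nonneg_left hβ (abs_nonneg k)).trans hk

variable {σ k v : ℝ}

theorem fiberQuantile_fiberCDF {β : ℝ} (hk : |k| * σ ≤ 1 / 2) (hβ : |β| ≤ σ) :
    fiberQuantile σ k (fiberCDF σ k β) = β := by
  have hkβ : k * β ≤ 1 / 2 := (abs_le.1 (abs_mul_le_half hk hβ)).2
  have hdisc : 1 - 2 * k * fiberCDF σ k β + k ^ 2 * σ ^ 2 = (1 - k * β) ^ 2 := by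
    rw [fiberCDF]; ring
  rw [fiberQuantile, hdisc, Real.sqrt_sq (by linarith), div_eq_iff (by linarith), fiberCDF]
  ring

theorem fiberCDF_mapsTo_Ioo (hk : |k| * σ ≤ 1 / 2) :
    MapsTo (fiberCDF σ k) (Ioo (-σ) σ) (Ioo (-σ) σ) := by
  intro β ⟨hβ₁, hβ₂⟩
  have hσ : |σ| ≤ σ := (abs_of_pos (by linarith)).le
  obtain ⟨-, h₂⟩ := abs_le.1 (abs_mul_le_half hk (abs_le.2 ⟨hβ₁.le, hβ₂.le⟩))
  obtain ⟨h₃, h₄⟩ := abs_le.1 (abs_mul_le_half hk hσ)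
  have hlow : 0 < (β + σ) * (1 - k * (β - σ) / 2) := mul_pos (by linarith) (by linarith)
  have hup : 0 < (σ - β) * (1 - k * (β + σ) / 2) := mul_pos (by linarith) (by linarith)
  unfold fiberCDF
  exact ⟨by linarith, by linarith⟩

theorem fiberCDF_image_Ioo (hk : |k| * σ ≤ 1 / 2) :
    fiberCDF σ k '' Ioo (-σ) σ = Ioo (-σ) σ := by
  rcases le_or_gt σ 0 with hσ | hσ
  · simp [Ioo_eq_empty (show ¬ -σ < σ by linarith)]
  refine (fiberCDF_mapsTo_Ioo hk).image_subset.antisymm ?_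
  have hcont : ContinuousOn (fiberCDF σ k) (Icc (-σ) σ) :=
    fun β _ => (hasDerivAt_fiberCDF σ k β).continuousAt.continuousWithinAt
  simpa [fiberCDF] using intermediate_value_Ioo (by linarith) hcont

theorem exists_fiberCDF_eq (hk : |k| * σ ≤ 1 / 2) (hv : |v| < σ) :
    ∃ β, |β| < σ ∧ fiberCDF σ k β = v := by
  obtain ⟨β, hβ, rfl⟩ := (fiberCDF_image_Ioo hk).symm.subset (abs_lt.1 hv)
  exact ⟨β, abs_lt.2 hβ, rfl⟩

theorem abs_fiberQuantile_lt (hk : |k| * σ ≤ 1 / 2) (hv : |v| < σ) :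
    |fiberQuantile σ k v| < σ := by
  obtain ⟨β, hβ, rfl⟩ := exists_fiberCDF_eq hk hv
  rwa [fiberQuantile_fiberCDF hk hβ.le]

theorem fiberCDF_fiberQuantile (hk : |k| * σ ≤ 1 / 2) (hv : |v| < σ) :
    fiberCDF σ k (fiberQuantile σ k v) = v := by
  obtain ⟨β, hβ, rfl⟩ := exists_fiberCDF_eq hk hv
  rw [fiberQuantile_fiberCDF hk hβ.le]

theorem lintegral_comp_fiberQuantile (hk : |k| * σ ≤ 1 / 2) (g : ℝ → ℝ≥0∞) :
    ∫⁻ v in Ioo (-σ) σ, g (fiberQuantile σ k v) =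
      ∫⁻ β in Ioo (-σ) σ, ENNReal.ofReal |1 - k * β| * g β := by
  have hleft : LeftInvOn (fiberQuantile σ k) (fiberCDF σ k) (Ioo (-σ) σ) :=
    fun β hβ => fiberQuantile_fiberCDF hk (abs_lt.2 hβ).le
  conv_lhs => rw [← fiberCDF_image_Ioo hk]
  rw [lintegral_image_eq_lintegral_abs_deriv_mul measurableSet_Ioo
    (fun β _ => (hasDerivAt_fiberCDF σ k β).hasDerivWithinAt) hleft.injOn]
  exact setLIntegral_congr_fun measurableSet_Ioo fun β hβ => by rw [hleft hβ]

theorem abs_sq_sub_sq_le {b : ℝ} (hb : |b| ≤ σ) : |b ^ 2 - σ ^ 2| ≤ σ ^ 2 := by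
  have := sq_le_sq' (abs_le.1 hb).1 (abs_le.1 hb).2
  rw [abs_of_nonpos (by linarith)]
  linarith [sq_nonneg b]

theorem abs_fiberQuantile_sub_fiberQuantile_le {k₁ k₂ : ℝ} (hk₁ : |k₁| * σ ≤ 1 / 2)
    (hk₂ : |k₂| * σ ≤ 1 / 2) (hv : |v| < σ) :
    |fiberQuantile σ k₁ v - fiberQuantile σ k₂ v| ≤ |k₁ - k₂| * σ ^ 2 := by
  have hb₁ := (abs_fiberQuantile_lt hk₁ hv).le
  have hb₂ := (abs_fiberQuantile_lt hk₂ hv).le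
  have hv₁ := fiberCDF_fiberQuantile hk₁ hv
  have hv₂ := fiberCDF_fiberQuantile hk₂ hv
  set b₁ := fiberQuantile σ k₁ v
  set b₂ := fiberQuantile σ k₂ v
  have hfactor : (b₁ - b₂) * (1 - (k₂ * b₁ + k₂ * b₂) / 2) =
      (k₁ - k₂) * (b₁ ^ 2 - σ ^ 2) / 2 := by
    unfold fiberCDF at hv₁ hv₂
    linear_combination hv₁ - hv₂
  have hslope : 1 / 2 ≤ 1 - (k₂ * b₁ + k₂ * b₂) / 2 := by
    linarith [(abs_le.1 (abs_mul_le_half hk₂ hb₁)).2, (abs_le.1 (abs_mul_le_half hk₂ hb₂)).2]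
  have habs : |b₁ - b₂| * (1 - (k₂ * b₁ + k₂ * b₂) / 2) =
      |k₁ - k₂| * |b₁ ^ 2 - σ ^ 2| / 2 := by
    rw [← abs_mul, ← abs_two, ← abs_div, ← hfactor, abs_mul, abs_two,
      abs_of_pos (by linarith : 0 < 1 - (k₂ * b₁ + k₂ * b₂) / 2)]
  nlinarith [mul_le_mul_of_nonneg_left hslope (abs_nonneg (b₁ - b₂)),
    mul_le_mul_of_nonneg_left (abs_sq_sub_sq_le hb₁) (abs_nonneg (k₁ - k₂))]

theorem abs_fiberQuantile_sub_approx_le (hk : |k| * σ ≤ 1 / 2) (hv : |v| < σ) :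
    |fiberQuantile σ k v - (v - k * (σ ^ 2 - v ^ 2) / 2)| ≤ k ^ 2 * σ ^ 3 := by
  have hb := (abs_fiberQuantile_lt hk hv).le
  have hcdf := fiberCDF_fiberQuantile hk hv
  set b := fiberQuantile σ k v
  have hσ : 0 ≤ σ := (abs_nonneg v).trans hv.le
  have hfactor : b - (v - k * (σ ^ 2 - v ^ 2) / 2) =
      k ^ 2 / 4 * ((b + v) * (b ^ 2 - σ ^ 2)) := by
    unfold fiberCDF at hcdf
    linear_combination (1 + k / 2 * (b + v)) * hcdf
  have hsum : |b + v| ≤ 2 * σ := (abs_add_le b v).trans (by linarith)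
  calc |b - (v - k * (σ ^ 2 - v ^ 2) / 2)| = k ^ 2 / 4 * (|b + v| * |b ^ 2 - σ ^ 2|) := by
        rw [hfactor, abs_mul, abs_mul, abs_of_nonneg (by positivity : 0 ≤ k ^ 2 / 4)]
    _ ≤ k ^ 2 / 4 * (2 * σ * σ ^ 2) := by gcongr; exact abs_sq_sub_sq_le hb
    _ ≤ k ^ 2 * σ ^ 3 := by nlinarith [show 0 ≤ k ^ 2 * σ ^ 3 by positivity]

end Fiber

section Frame

variable {E : Type*} [NormedAddCommGroup E] [InnerProductSpace ℝ E]

/-- `T` and `N` are the unit tangent and a unit normal of the curve `γ` at the parameter `t`, and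
obey the planar Frenet equations there; `κ` is the signed curvature with respect to `N`. -/
structure IsFrenetFrameAt (γ T N : ℝ → E) (κ : ℝ → ℝ) (t : ℝ) : Prop where
  hasDerivAt_curve : HasDerivAt γ (T t) t
  hasDerivAt_tangent : HasDerivAt T (κ t • N t) t
  hasDerivAt_normal : HasDerivAt N (-κ t • T t) t
  norm_tangent : ‖T t‖ = 1
  norm_normal : ‖N t‖ = 1
  inner_tangent_normal : ⟪T t, N t⟫ = 0

/-- The Fermi chart `φ(α, β) = γ(α) + β n(α)` of the curve `γ` with normal field `N`. -/
def fermiChart (γ N : ℝ → E) (p : ℝ × ℝ) : E := γ p.1 + p.2 • N p.1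

/-- The parameter rectangle `(t - ε, t + ε) × (-σ, σ)` whose image under the Fermi chart carries
the test measure at `γ t`. -/
def fermiBox (t ε σ : ℝ) : Set (ℝ × ℝ) := Ioo (t - ε) (t + ε) ×ˢ Ioo (-σ) σ

/-- The Fermi chart with every normal fiber reparametrized by `fiberQuantile`, so that the chart
preserves area. -/
noncomputable def equalizedChart (γ N : ℝ → E) (κ : ℝ → ℝ) (σ : ℝ) (p : ℝ × ℝ) : E :=
  fermiChart γ N (p.1, fiberQuantile σ (κ p.1) p.2)

/-- The Fermi chart is nondegenerate on `fermiBox t ε σ`: `γ` has a Frenet frame along it, the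
normal fibers are short compared to the radius of curvature, and the chart is injective. -/
structure IsRegularFermiBox (γ T N : ℝ → E) (κ : ℝ → ℝ) (t ε σ : ℝ) : Prop where
  isFrenetFrameAt : ∀ s ∈ Ioo (t - ε) (t + ε), IsFrenetFrameAt γ T N κ s
  abs_curvature_mul_le : ∀ s ∈ Ioo (t - ε) (t + ε), |κ s| * σ ≤ 1 / 2
  injOn_fermiChart : InjOn (fermiChart γ N) (fermiBox t ε σ)

variable {γ T N : ℝ → E} {κ : ℝ → ℝ}

theorem IsFrenetFrameAt.hasFDerivAt_fermiChart {p : ℝ × ℝ}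
    (h : IsFrenetFrameAt γ T N κ p.1) :
    HasFDerivAt (fermiChart γ N)
      (((1 - κ p.1 * p.2) • ContinuousLinearMap.fst ℝ ℝ ℝ).smulRight (T p.1) +
        (ContinuousLinearMap.snd ℝ ℝ ℝ).smulRight (N p.1)) p := by
  have hfst : HasFDerivAt Prod.fst (ContinuousLinearMap.fst ℝ ℝ ℝ) p := hasFDerivAt_fst
  have hsnd : HasFDerivAt Prod.snd (ContinuousLinearMap.snd ℝ ℝ ℝ) p := hasFDerivAt_snd
  have hsum := (h.hasDerivAt_curve.hasFDerivAt.comp p hfst).add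
    (hsnd.smul (h.hasDerivAt_normal.hasFDerivAt.comp p hfst))
  convert! hsum using 1
  ext <;> simp [sub_eq_add_neg, add_smul, smul_smul, mul_comm]

theorem measurable_equalizedChart [MeasurableSpace E] [BorelSpace E] [SecondCountableTopology E]
    (hγ : Measurable γ) (hN : Measurable N) (hκ : Measurable κ) (σ : ℝ) :
    Measurable (equalizedChart γ N κ σ) := by
  have hq : Measurable fun p : ℝ × ℝ => fiberQuantile σ (κ p.1) p.2 :=
    (measurable_fiberQuantile σ).comp ((hκ.comp measurable_fst).prodMk measurable_snd)
  unfold equalizedChart fermiChart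
  fun_prop

end Frame

section AreaPreservation

theorem lintegral_image_eq_lintegral_abs_area_mul
    {f : ℝ × ℝ → EuclideanSpace ℝ (Fin 2)} {f' : ℝ × ℝ → ℝ × ℝ →L[ℝ] EuclideanSpace ℝ (Fin 2)}
    {S : Set (ℝ × ℝ)} (hS : MeasurableSet S) (hf : ∀ p ∈ S, HasFDerivAt f (f' p) p)
    (hinj : InjOn f S) (g : EuclideanSpace ℝ (Fin 2) → ℝ≥0∞) :
    ∫⁻ x in f '' S, g x = ∫⁻ p in S,
      ENNReal.ofReal |f' p (1, 0) 0 * f' p (0, 1) 1 - f' p (0, 1) 0 * f' p (1, 0) 1| *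
        g (f p) := by
  let e : EuclideanSpace ℝ (Fin 2) ≃ᵐ ℝ × ℝ :=
    (MeasurableEquiv.toLp 2 (Fin 2 → ℝ)).symm.trans MeasurableEquiv.finTwoArrow
  have he : MeasurePreserving e volume volume :=
    (EuclideanSpace.volume_preserving_symm_measurableEquiv_toLp (Fin 2)).trans
      (volume_preserving_finTwoArrow ℝ)
  let coords : EuclideanSpace ℝ (Fin 2) →L[ℝ] ℝ × ℝ :=
    (EuclideanSpace.proj 0).prod (EuclideanSpace.proj 1)
  have hderiv : ∀ p ∈ S, HasFDerivWithinAt (e ∘ f) (coords ∘L f' p) S p := fun p hp =>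
    (coords.hasFDerivAt.comp p (hf p hp)).hasFDerivWithinAt
  have hdet : ∀ p, (coords ∘L f' p).det =
      f' p (1, 0) 0 * f' p (0, 1) 1 - f' p (0, 1) 0 * f' p (1, 0) 1 := fun p => by
    rw [ContinuousLinearMap.det, ← LinearMap.det_toMatrix (Module.Basis.finTwoProd ℝ),
      Matrix.det_fin_two]
    simp [LinearMap.toMatrix_apply, coords]
  calc ∫⁻ x in f '' S, g x = ∫⁻ y in e ∘ f '' S, g (e.symm y) := by
        rw [image_comp, ← he.setLIntegral_comp_emb e.measurableEmbedding]
        simp only [MeasurableEquiv.symm_apply_apply]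
    _ = _ := by
        rw [lintegral_image_eq_lintegral_abs_det_fderiv_mul volume hS hderiv
          (e.injective.comp_injOn hinj)]
        simp only [hdet, Function.comp_apply, MeasurableEquiv.symm_apply_apply]

theorem sq_area_add_sq_inner (x y : EuclideanSpace ℝ (Fin 2)) :
    (x 0 * y 1 - y 0 * x 1) ^ 2 + ⟪x, y⟫ ^ 2 = ‖x‖ ^ 2 * ‖y‖ ^ 2 := by
  simp only [EuclideanSpace.real_norm_sq_eq, PiLp.inner_apply, Fin.sum_univ_two,
    RCLike.inner_apply, conj_trivial]
  ring

variable {γ T N : ℝ → EuclideanSpace ℝ (Fin 2)} {κ : ℝ → ℝ}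

theorem lintegral_image_fermiChart {S : Set (ℝ × ℝ)} (hS : MeasurableSet S)
    (hF : ∀ p ∈ S, IsFrenetFrameAt γ T N κ p.1) (hinj : InjOn (fermiChart γ N) S)
    (g : EuclideanSpace ℝ (Fin 2) → ℝ≥0∞) :
    ∫⁻ x in fermiChart γ N '' S, g x =
      ∫⁻ p in S, ENNReal.ofReal |1 - κ p.1 * p.2| * g (fermiChart γ N p) := by
  rw [lintegral_image_eq_lintegral_abs_area_mul hS (fun p hp => (hF p hp).hasFDerivAt_fermiChart)
    hinj]
  refine setLIntegral_congr_fun hS fun p hp => ?_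
  have harea := sq_area_add_sq_inner ((1 - κ p.1 * p.2) • T p.1) (N p.1)
  rw [inner_smul_left, (hF p hp).inner_tangent_normal, norm_smul, (hF p hp).norm_tangent,
    (hF p hp).norm_normal, mul_zero, Real.norm_eq_abs] at harea
  congr 2
  rw [← sq_eq_sq_iff_abs_eq_abs]
  simpa using harea

theorem measurePreserving_equalizedChart {I : Set ℝ} {σ : ℝ} (hI : MeasurableSet I)
    (hF : ∀ t ∈ I, IsFrenetFrameAt γ T N κ t) (hκσ : ∀ t ∈ I, |κ t| * σ ≤ 1 / 2)
    (hinj : InjOn (fermiChart γ N) (I ×ˢ Ioo (-σ) σ))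
    (hγ : Measurable γ) (hN : Measurable N) (hκ : Measurable κ) :
    MeasurePreserving (equalizedChart γ N κ σ) (volume.restrict (I ×ˢ Ioo (-σ) σ))
      (volume.restrict (fermiChart γ N '' (I ×ˢ Ioo (-σ) σ))) := by
  have hchart := measurable_equalizedChart hγ hN hκ σ
  have hfermi : Measurable (fermiChart γ N) := by unfold fermiChart; fun_prop
  refine ⟨hchart, Measure.ext_of_lintegral _ fun g hg => ?_⟩
  calc ∫⁻ x, g x ∂(volume.restrict (I ×ˢ Ioo (-σ) σ)).map (equalizedChart γ N κ σ)
      = ∫⁻ t in I, ∫⁻ v in Ioo (-σ) σ, g (equalizedChart γ N κ σ (t, v)) := by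
        rw [lintegral_map hg hchart, Measure.volume_eq_prod, ← Measure.prod_restrict,
          lintegral_prod _ (by fun_prop)]
    _ = ∫⁻ t in I, ∫⁻ β in Ioo (-σ) σ,
          ENNReal.ofReal |1 - κ t * β| * g (fermiChart γ N (t, β)) :=
        setLIntegral_congr_fun hI fun t ht =>
          lintegral_comp_fiberQuantile (hκσ t ht) fun β => g (fermiChart γ N (t, β))
    _ = ∫⁻ x in fermiChart γ N '' (I ×ˢ Ioo (-σ) σ), g x := by
        rw [lintegral_image_fermiChart (hI.prod measurableSet_Ioo) (fun p hp => hF p.1 hp.1) hinj,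
          Measure.volume_eq_prod, ← Measure.prod_restrict, lintegral_prod _ (by fun_prop)]

theorem normRestrict_eq_map {X Y : Type*} [MeasureSpace X] [MeasureSpace Y] {s : Set X}
    {s' : Set Y} {f : X → Y} (hf : MeasurePreserving f (volume.restrict s) (volume.restrict s')) :
    normRestrict s' = (normRestrict s).map f := by
  have hvol : volume s' = volume s := by
    rw [← Measure.restrict_apply_univ, ← hf.map_eq, Measure.map_apply hf.measurable .univ,
      preimage_univ, Measure.restrict_apply_univ]
  rw [normRestrict, normRestrict, Measure.map_smul, hf.map_eq, hvol]

theorem IsRegularFermiBox.normRestrict_image_eq_map {t ε σ : ℝ}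
    (h : IsRegularFermiBox γ T N κ t ε σ) (hγ : Measurable γ) (hN : Measurable N)
    (hκ : Measurable κ) :
    normRestrict (fermiChart γ N '' fermiBox t ε σ) =
      (normRestrict (fermiBox 0 ε σ)).map fun p => equalizedChart γ N κ σ ((t, 0) + p) := by
  have hbox : ((t, 0) + ·) ⁻¹' fermiBox t ε σ = fermiBox 0 ε σ := by
    ext p
    simp only [fermiBox, mem_preimage, mem_prod, mem_Ioo, Prod.fst_add, Prod.snd_add, zero_add]
    refine and_congr_left fun _ => ?_
    constructor <;> rintro ⟨h₁, h₂⟩ <;> constructor <;> linarith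
  have hshift := (measurePreserving_add_left volume ((t, 0) : ℝ × ℝ)).restrict_preimage
    (s := fermiBox t ε σ) (measurableSet_Ioo.prod measurableSet_Ioo)
  rw [hbox] at hshift
  exact normRestrict_eq_map ((measurePreserving_equalizedChart measurableSet_Ioo
    h.isFrenetFrameAt h.abs_curvature_mul_le h.injOn_fermiChart hγ hN hκ).comp hshift)

end AreaPreservation

section UniformBox

theorem ae_mem_normRestrict {X : Type*} [MeasureSpace X] {s : Set X} (hs : MeasurableSet s) :
    ∀ᵐ x ∂normRestrict s, x ∈ s :=
  ProbabilityTheory.ae_cond_mem hs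

theorem measurableSet_fermiBox (t ε σ : ℝ) : MeasurableSet (fermiBox t ε σ) :=
  measurableSet_Ioo.prod measurableSet_Ioo

theorem volume_fermiBox (t ε σ : ℝ) :
    volume (fermiBox t ε σ) = ENNReal.ofReal (2 * ε) * ENNReal.ofReal (2 * σ) := by
  rw [fermiBox, Measure.volume_eq_prod, Measure.prod_prod, Real.volume_Ioo, Real.volume_Ioo]
  congr 2 <;> ring

variable {t ε σ : ℝ}

theorem isProbabilityMeasure_normRestrict_fermiBox (hε : 0 < ε) (hσ : 0 < σ) :
    IsProbabilityMeasure (normRestrict (fermiBox t ε σ)) := by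
  apply ProbabilityTheory.cond_isProbabilityMeasure_of_finite
  · rw [volume_fermiBox]
    simp [hε, hσ]
  · rw [volume_fermiBox]
    finiteness

theorem integral_Ioo_symm_quadratic (hσ : 0 < σ) (a b k : ℝ) :
    ∫ v in Ioo (-σ) σ, (a + b * v + (σ ^ 2 - v ^ 2) / 2 * k) = 2 * σ * (a + σ ^ 2 / 3 * k) := by
  rw [← integral_Ioc_eq_integral_Ioo, ← intervalIntegral.integral_of_le (by linarith)]
  have hderiv : ∀ v ∈ uIcc (-σ) σ, HasDerivAt
      (fun v : ℝ => a * v + b * (v ^ 2 / 2) + (σ ^ 2 * v - v ^ 3 / 3) / 2 * k)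
      (a + b * v + (σ ^ 2 - v ^ 2) / 2 * k) v := fun v _ => by
    have h := (((hasDerivAt_id v).const_mul a).add
      (((hasDerivAt_pow 2 v).div_const 2).const_mul b)).add
      (((((hasDerivAt_id v).const_mul (σ ^ 2)).sub
        ((hasDerivAt_pow 3 v).div_const 3)).div_const 2).mul_const k)
    convert! h using 1
    norm_num
  rw [intervalIntegral.integral_eq_sub_of_hasDerivAt hderiv
    (Continuous.intervalIntegrable (by fun_prop) _ _)]
  ring

theorem integrable_fermiBox_quadratic {b : ℝ → ℝ} (hb : IntegrableOn b (Ioo (t - ε) (t + ε)))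
    (a k : ℝ) :
    IntegrableOn (fun p : ℝ × ℝ => a + b p.1 * p.2 + (σ ^ 2 - p.2 ^ 2) / 2 * k)
      (fermiBox t ε σ) := by
  have integrable_fiber {g : ℝ → ℝ} (hg : Continuous g) :
      Integrable g (volume.restrict (Ioo (-σ) σ)) :=
    (hg.integrableOn_Icc).mono_set Ioo_subset_Icc_self
  rw [IntegrableOn, fermiBox, Measure.volume_eq_prod, ← Measure.prod_restrict]
  exact ((integrable_const a).add (hb.mul_prod (integrable_fiber continuous_id))).add
    ((integrable_fiber (by fun_prop)).comp_snd (f := fun v => (σ ^ 2 - v ^ 2) / 2 * k) _)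

theorem integral_normRestrict_fermiBox_quadratic (hε : 0 < ε) (hσ : 0 < σ) {b : ℝ → ℝ}
    (hb : IntegrableOn b (Ioo (t - ε) (t + ε))) (a k : ℝ) :
    ∫ p, (a + b p.1 * p.2 + (σ ^ 2 - p.2 ^ 2) / 2 * k) ∂normRestrict (fermiBox t ε σ) =
      a + σ ^ 2 / 3 * k := by
  have hintegrable := integrable_fermiBox_quadratic (σ := σ) hb a k
  rw [fermiBox, Measure.volume_eq_prod] at hintegrable
  have hbox : ∫ p in fermiBox t ε σ, (a + b p.1 * p.2 + (σ ^ 2 - p.2 ^ 2) / 2 * k) =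
      2 * ε * (2 * σ * (a + σ ^ 2 / 3 * k)) := by
    rw [fermiBox, Measure.volume_eq_prod, setIntegral_prod _ hintegrable]
    simp only [integral_Ioo_symm_quadratic hσ]
    rw [setIntegral_const, Real.volume_real_Ioo_of_le (by linarith), smul_eq_mul]
    ring
  rw [normRestrict, integral_smul_measure, hbox, volume_fermiBox, ENNReal.toReal_inv,
    ENNReal.toReal_mul, ENNReal.toReal_ofReal (by positivity),
    ENNReal.toReal_ofReal (by positivity), smul_eq_mul]
  field_simp

end UniformBox

section LocalInjectivity

theorem exists_mem_nhds_injOn_of_hasStrictFDerivAt {E F : Type*} [NormedAddCommGroup E]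
    [NormedSpace ℝ E] [FiniteDimensional ℝ E] [NormedAddCommGroup F] [NormedSpace ℝ F]
    {f : E → F} {f' : E →L[ℝ] F} {x : E} (hf : HasStrictFDerivAt f f' x)
    (hf' : Function.Injective f') : ∃ U ∈ 𝓝 x, InjOn f U := by
  obtain ⟨K, -, hK⟩ := f'.toLinearMap.exists_antilipschitzWith (LinearMap.ker_eq_bot.2 hf')
  have hbound : (fun p : E × E => p.1 - p.2) =O[𝓝 (x, x)] fun p => f' (p.1 - p.2) :=
    .of_bound K (.of_forall fun p => by simpa using hK.le_mul_dist (p.1 - p.2) 0)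
  have hlinear := (hf.isLittleO.trans_isBigO hbound).bound one_half_pos
  rw [nhds_prod_eq, eventually_iff, mem_prod_self_iff] at hlinear
  obtain ⟨U, hU, hlinear⟩ := hlinear
  refine ⟨U, hU, fun a ha b hb hab => ?_⟩
  have hzero : f' (a - b) = 0 := by
    have : ‖f a - f b - f' (a - b)‖ ≤ 1 / 2 * ‖f' (a - b)‖ := hlinear (mk_mem_prod ha hb)
    rw [hab, sub_self, zero_sub, norm_neg] at this
    exact norm_le_zero_iff.1 (by linarith)
  exact sub_eq_zero.1 (hf' (hzero.trans (map_zero f').symm))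

variable {E : Type*} [NormedAddCommGroup E] [InnerProductSpace ℝ E]
  {γ T N : ℝ → E} {κ : ℝ → ℝ} {t : ℝ}

theorem hasStrictDerivAt_of_eventually_isFrenetFrameAt
    (hF : ∀ᶠ s in 𝓝 t, IsFrenetFrameAt γ T N κ s) : HasStrictDerivAt γ (T t) t :=
  hasStrictDerivAt_of_hasDerivAt_of_continuousAt (hF.mono fun _ hs => hs.hasDerivAt_curve)
    hF.self_of_nhds.hasDerivAt_tangent.continuousAt

theorem hasStrictDerivAt_normal_of_eventually_isFrenetFrameAt
    (hF : ∀ᶠ s in 𝓝 t, IsFrenetFrameAt γ T N κ s) (hκ : ContinuousAt κ t) :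
    HasStrictDerivAt N (-κ t • T t) t :=
  hasStrictDerivAt_of_hasDerivAt_of_continuousAt (f' := fun s => -κ s • T s)
    (hF.mono fun _ hs => hs.hasDerivAt_normal)
    (hκ.neg.smul hF.self_of_nhds.hasDerivAt_tangent.continuousAt)

theorem hasStrictFDerivAt_fermiChart (hF : ∀ᶠ s in 𝓝 t, IsFrenetFrameAt γ T N κ s)
    (hκ : ContinuousAt κ t) :
    HasStrictFDerivAt (fermiChart γ N) ((ContinuousLinearMap.fst ℝ ℝ ℝ).smulRight (T t) +
      (ContinuousLinearMap.snd ℝ ℝ ℝ).smulRight (N t)) (t, 0) := by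
  have hfst : HasStrictFDerivAt Prod.fst (ContinuousLinearMap.fst ℝ ℝ ℝ) (t, (0 : ℝ)) :=
    hasStrictFDerivAt_fst
  have hsnd : HasStrictFDerivAt Prod.snd (ContinuousLinearMap.snd ℝ ℝ ℝ) (t, (0 : ℝ)) :=
    hasStrictFDerivAt_snd
  have hγ := (hasStrictDerivAt_of_eventually_isFrenetFrameAt hF).hasStrictFDerivAt
  have hN := (hasStrictDerivAt_normal_of_eventually_isFrenetFrameAt hF hκ).hasStrictFDerivAt
  convert! (hγ.comp (t, 0) hfst).add (hsnd.smul (hN.comp (t, 0) hfst)) using 1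
  ext <;> simp

theorem exists_injOn_fermiChart_fermiBox (hF : ∀ᶠ s in 𝓝 t, IsFrenetFrameAt γ T N κ s)
    (hκ : ContinuousAt κ t) : ∃ ρ > 0, InjOn (fermiChart γ N) (fermiBox t ρ ρ) := by
  have ht := hF.self_of_nhds
  have hinj : Function.Injective ((ContinuousLinearMap.fst ℝ ℝ ℝ).smulRight (T t) +
      (ContinuousLinearMap.snd ℝ ℝ ℝ).smulRight (N t)) := by
    refine (injective_iff_map_eq_zero _).2 fun p hp => ?_
    have hp : p.1 • T t + p.2 • N t = 0 := hp
    have h₁ : p.1 = 0 := by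
      simpa [inner_add_right, inner_smul_right, ht.inner_tangent_normal, ht.norm_tangent]
        using congrArg (fun x => ⟪T t, x⟫) hp
    have h₂ : p.2 = 0 := by
      simpa [inner_add_left, inner_smul_left, ht.inner_tangent_normal, ht.norm_normal]
        using congrArg (fun x => ⟪x, N t⟫) hp
    exact Prod.ext h₁ h₂
  obtain ⟨U, hU, hUinj⟩ :=
    exists_mem_nhds_injOn_of_hasStrictFDerivAt (hasStrictFDerivAt_fermiChart hF hκ) hinj
  obtain ⟨ρ, hρ, hball⟩ := Metric.mem_nhds_iff.1 hU
  refine ⟨ρ, hρ, hUinj.mono (subset_trans (Eq.subset ?_) hball)⟩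
  rw [← ball_prod_same, Real.ball_eq_Ioo, Real.ball_eq_Ioo, fermiBox, zero_sub, zero_add]

end LocalInjectivity

section InnerProductEstimates

variable {E : Type*} [NormedAddCommGroup E] [InnerProductSpace ℝ E]

theorem isBigO_inner {ι : Type*} {l : Filter ι} {x y : ι → E} {a b : ι → ℝ} (hx : x =O[l] a)
    (hy : y =O[l] b) : (fun i => ⟪x i, y i⟫) =O[l] fun i => a i * b i :=
  (Asymptotics.isBigO_of_le l fun i => by
    simpa using abs_real_inner_le_norm (x i) (y i)).trans (hx.norm_left.mul hy.norm_left)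

theorem inner_sub_one_eq_neg_norm_sub_sq {x y : E} (hx : ‖x‖ = 1) (hy : ‖y‖ = 1) :
    ⟪x, y⟫ - 1 = -(‖x - y‖ ^ 2 / 2) := by
  rw [norm_sub_sq_real, hx, hy]
  ring

theorem norm_sub_inner_mul_inner_le {u : E} (hu : ‖u‖ = 1) (x : E) (r : ℝ) :
    (‖x‖ - ⟪x, u⟫) * ⟪x, u⟫ ≤ ‖x - r • u‖ ^ 2 := by
  have hle : ⟪x, u⟫ ≤ ‖x‖ := by simpa [hu] using real_inner_le_norm x u
  rw [norm_sub_sq_real, norm_smul, hu, inner_smul_right, mul_one, Real.norm_eq_abs, sq_abs]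
  nlinarith [norm_nonneg x, sq_nonneg (r - ⟪x, u⟫)]

end InnerProductEstimates

section Increments

variable {G : Type*} [NormedAddCommGroup G] [NormedSpace ℝ G] {g g' : ℝ → G} {a : G}

theorem norm_sub_sub_smul_le_of_norm_deriv_sub_le {s : Set ℝ} (hs : Convex ℝ s) {C : ℝ}
    (hg : ∀ t ∈ s, HasDerivAt g (g' t) t) (hg' : ∀ t ∈ s, ‖g' t - a‖ ≤ C) {x y : ℝ} (hx : x ∈ s)
    (hy : y ∈ s) : ‖g y - g x - (y - x) • a‖ ≤ C * |y - x| := by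
  have hderiv : ∀ t ∈ s, HasDerivWithinAt (fun r => g r - r • a) (g' t - a) s t := fun t ht => by
    simpa using ((hg t ht).fun_sub ((hasDerivAt_id t).smul_const a)).hasDerivWithinAt
  calc ‖g y - g x - (y - x) • a‖ = ‖(g y - y • a) - (g x - x • a)‖ := by
        rw [sub_smul, sub_sub_sub_comm]
    _ ≤ C * |y - x| := hs.norm_image_sub_le_of_norm_hasDerivWithin_le hderiv hg' hx hy

theorem isBigO_sub_sub_smul_of_hasDerivAt {m : ℕ} (hg : ∀ᶠ t in 𝓝 0, HasDerivAt g (g' t) t)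
    (hg' : (fun t => g' t - a) =O[𝓝 0] fun t => t ^ m) {ι : Type*} {l : Filter ι}
    {δ x y : ι → ℝ} (hδ : Tendsto δ l (𝓝 0)) (hx : x =O[l] δ) (hy : y =O[l] δ) :
    (fun i => g (y i) - g (x i) - (y i - x i) • a) =O[l] fun i => δ i ^ m * (y i - x i) := by
  obtain ⟨C, hC, hbound⟩ := hg'.exists_nonneg
  obtain ⟨ρ, hρ, hball⟩ := Metric.eventually_nhds_iff_ball.1 (hg.and hbound.bound)
  have hxy : (fun i => (x i, y i)) =O[l] δ := hx.prod_left hy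
  have hnear : ∀ᶠ i in l, ‖(x i, y i)‖ < ρ :=
    (hxy.trans_tendsto hδ).norm.eventually_lt_const (by simpa)
  have hmvt : (fun i => g (y i) - g (x i) - (y i - x i) • a) =O[l]
      fun i => ‖(x i, y i)‖ ^ m * (y i - x i) := by
    refine .of_bound C (hnear.mono fun i hi => ?_)
    have hmem : ∀ t ∈ Metric.closedBall (0 : ℝ) ‖(x i, y i)‖,
        HasDerivAt g (g' t) t ∧ ‖g' t - a‖ ≤ C * ‖(x i, y i)‖ ^ m := fun t ht => by
      rw [mem_closedBall_zero_iff] at ht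
      obtain ⟨hderiv, hle⟩ := hball t (mem_ball_zero_iff.2 (ht.trans_lt hi))
      refine ⟨hderiv, hle.trans ?_⟩
      rw [norm_pow]
      gcongr
    have hle := norm_sub_sub_smul_le_of_norm_deriv_sub_le (convex_closedBall _ _)
      (fun t ht => (hmem t ht).1) (fun t ht => (hmem t ht).2)
      (mem_closedBall_zero_iff.2 (norm_fst_le (x i, y i)))
      (mem_closedBall_zero_iff.2 (norm_snd_le (x i, y i)))
    rwa [norm_mul, norm_pow, norm_norm, ← mul_assoc]
  exact hmvt.trans ((hxy.norm_left.pow m).mul (Asymptotics.isBigO_refl _ l))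

end Increments

section Chord

variable {E : Type*} [NormedAddCommGroup E] [InnerProductSpace ℝ E]

/-- The unit vector pointing from `γ 0` to `γ t`, or `0` if the two points coincide. -/
noncomputable def chordDir (γ : ℝ → E) (t : ℝ) : E := ‖γ t - γ 0‖⁻¹ • (γ t - γ 0)

theorem norm_smul_chordDir (γ : ℝ → E) (t : ℝ) : ‖γ t - γ 0‖ • chordDir γ t = γ t - γ 0 := by
  rcases eq_or_ne (γ t - γ 0) 0 with h | h
  · rw [h, norm_zero, zero_smul]
  · exact smul_inv_smul₀ (norm_ne_zero_iff.2 h) _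

variable {γ T N : ℝ → E} {κ : ℝ → ℝ} (hF : ∀ᶠ t in 𝓝 0, IsFrenetFrameAt γ T N κ t)

include hF

theorem isBigO_tangent_sub : (fun t => T t - T 0) =O[𝓝 0] fun t => t := by
  simpa using hF.self_of_nhds.hasDerivAt_tangent.isBigO_sub

section Increments

variable {ι : Type*} {l : Filter ι} {δ x y : ι → ℝ} (hδ : Tendsto δ l (𝓝 0))
  (hx : x =O[l] δ) (hy : y =O[l] δ)

include hδ hx hy

theorem isBigO_curve_sub_sub_tangent :
    (fun i => γ (y i) - γ (x i) - (y i - x i) • T 0) =O[l] fun i => δ i * (y i - x i) := by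
  simpa only [pow_one] using isBigO_sub_sub_smul_of_hasDerivAt (m := 1)
    (hF.mono fun _ ht => ht.hasDerivAt_curve) (by simpa using isBigO_tangent_sub hF) hδ hx hy

-- One order better than the bound above: `⟪T t, T 0⟫ - 1` is quadratic in `t`.
theorem isBigO_inner_curve_sub_sub_tangent :
    (fun i => ⟪γ (y i) - γ (x i), T 0⟫ - (y i - x i)) =O[l]
      fun i => δ i ^ 2 * (y i - x i) := by
  have hderiv : ∀ᶠ t in 𝓝 0, HasDerivAt (fun t => ⟪γ t, T 0⟫) ⟪T t, T 0⟫ t :=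
    hF.mono fun t ht => by simpa using ht.hasDerivAt_curve.inner ℝ (hasDerivAt_const t (T 0))
  have hquad : (fun t => ⟪T t, T 0⟫ - 1) =O[𝓝 0] fun t => t ^ 2 := by
    refine (((isBigO_tangent_sub hF).norm_left.pow 2).const_mul_left (-1 / 2)).congr'
      (hF.mono fun t ht => ?_) .rfl
    beta_reduce
    rw [inner_sub_one_eq_neg_norm_sub_sq ht.norm_tangent hF.self_of_nhds.norm_tangent]
    ring
  simpa [inner_sub_left] using isBigO_sub_sub_smul_of_hasDerivAt hderiv hquad hδ hx hy

end Increments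

theorem isBigO_chord_sub_tangent :
    (fun t => γ t - γ 0 - t • T 0) =O[𝓝[>] 0] fun t => t ^ 2 := by
  simpa [sq] using isBigO_curve_sub_sub_tangent hF (l := 𝓝[>] 0) (δ := fun t => t)
    (x := fun _ => 0) (y := fun t => t) nhdsWithin_le_nhds (Asymptotics.isBigO_zero _ _)
    (Asymptotics.isBigO_refl _ _)

theorem isBigO_norm_chord_sub : (fun t => ‖γ t - γ 0‖ - t) =O[𝓝[>] 0] fun t => t ^ 2 := by
  refine (Asymptotics.IsBigO.of_norm_eventuallyLE ?_).trans
    (isBigO_chord_sub_tangent hF).norm_left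
  filter_upwards [self_mem_nhdsWithin] with t (ht : 0 < t)
  have hnorm : ‖t • T 0‖ = t := by
    rw [norm_smul, hF.self_of_nhds.norm_tangent, mul_one, Real.norm_of_nonneg ht.le]
  simpa [hnorm] using abs_norm_sub_norm_le (γ t - γ 0) (t • T 0)

theorem isEquivalent_norm_chord : (fun t => ‖γ t - γ 0‖) ~[𝓝[>] 0] fun t => t :=
  (isBigO_norm_chord_sub hF).trans_isLittleO
    ((Asymptotics.isLittleO_pow_id one_lt_two).mono nhdsWithin_le_nhds)

theorem eventually_norm_chord_pos : ∀ᶠ t in 𝓝[>] 0, 0 < ‖γ t - γ 0‖ :=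
  (isEquivalent_norm_chord hF).eventually_pos self_mem_nhdsWithin

theorem eventually_norm_chordDir : ∀ᶠ t in 𝓝[>] 0, ‖chordDir γ t‖ = 1 := by
  filter_upwards [eventually_norm_chord_pos hF] with t ht
  rw [chordDir, norm_smul, norm_inv, norm_norm, inv_mul_cancel₀ ht.ne']

theorem isBigO_chordDir_sub_tangent :
    (fun t => chordDir γ t - T 0) =O[𝓝[>] 0] fun t => t := by
  have hscaled : (fun t => γ t - γ 0 - t • T 0 - (‖γ t - γ 0‖ - t) • T 0) =O[𝓝[>] 0]
      fun t => t ^ 2 := by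
    refine (isBigO_chord_sub_tangent hF).sub ?_
    simpa using (isBigO_norm_chord_sub hF).smul
      (Asymptotics.isBigO_const_const (T 0) (one_ne_zero (α := ℝ)) (𝓝[>] 0))
  refine ((isEquivalent_norm_chord hF).inv.isBigO.smul hscaled).congr' ?_ ?_
  · filter_upwards [eventually_norm_chord_pos hF] with t ht
    simp only [Pi.inv_apply, chordDir, smul_sub, sub_smul, inv_smul_smul₀ ht.ne']
    abel
  · filter_upwards [self_mem_nhdsWithin] with t (ht : 0 < t)
    simp only [Pi.inv_apply, smul_eq_mul]
    field_simp

end Chord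

section FiberAsymptotics

variable {ι : Type*} {l : Filter ι} {δ σ v k : ι → ℝ} {k₀ : ℝ}

theorem eventually_abs_mul_le_half (hk : Tendsto k l (𝓝 k₀)) (hσ : Tendsto σ l (𝓝 0)) :
    ∀ᶠ i in l, |k i| * σ i ≤ 1 / 2 := by
  have h : Tendsto (fun i => |k i| * σ i) l (𝓝 0) := by simpa using hk.abs.mul hσ
  exact h.eventually_le_const one_half_pos

variable (hδ : Tendsto δ l (𝓝 0)) (hσ : σ =O[l] δ) (hv : ∀ᶠ i in l, |v i| < σ i)

include hv in
theorem isBigO_of_eventually_abs_lt (hσ : σ =O[l] δ) : v =O[l] δ :=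
  (Asymptotics.IsBigO.of_norm_eventuallyLE (hv.mono fun _ hi => hi.le)).trans hσ

include hδ hσ hv

theorem isBigO_fiberQuantile (hk : Tendsto k l (𝓝 k₀)) :
    (fun i => fiberQuantile (σ i) (k i) (v i)) =O[l] δ := by
  refine isBigO_of_eventually_abs_lt ?_ hσ
  filter_upwards [hv, eventually_abs_mul_le_half hk (hσ.trans_tendsto hδ)] with i hvi hki
  exact abs_fiberQuantile_lt hki hvi

theorem isLittleO_fiberQuantile_sub {k' : ι → ℝ} (hk : Tendsto k l (𝓝 k₀))
    (hk' : Tendsto k' l (𝓝 k₀)) :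
    (fun i => fiberQuantile (σ i) (k i) (v i) - fiberQuantile (σ i) (k' i) (v i)) =o[l]
      fun i => δ i ^ 2 := by
  have hkk' : (fun i => |k i - k' i|) =o[l] fun _ => (1 : ℝ) :=
    (Asymptotics.isLittleO_one_iff ℝ).2 (by simpa using (hk.sub hk').abs)
  refine (Asymptotics.IsBigO.of_norm_eventuallyLE ?_).trans_isLittleO
    (by simpa using hkk'.mul_isBigO (hσ.pow 2))
  filter_upwards [hv, eventually_abs_mul_le_half hk (hσ.trans_tendsto hδ),
    eventually_abs_mul_le_half hk' (hσ.trans_tendsto hδ)] with i hvi hki hki'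
  exact abs_fiberQuantile_sub_fiberQuantile_le hki hki' hvi

theorem isLittleO_fiberQuantile_sub_approx (hk : Tendsto k l (𝓝 k₀)) :
    (fun i => fiberQuantile (σ i) (k i) (v i) - v i + k₀ * ((σ i ^ 2 - v i ^ 2) / 2)) =o[l]
      fun i => δ i ^ 2 := by
  have hvO := isBigO_of_eventually_abs_lt hv hσ
  have hcubic : (fun i => fiberQuantile (σ i) (k i) (v i) -
      (v i - k i * (σ i ^ 2 - v i ^ 2) / 2)) =o[l] fun i => δ i ^ 2 := by
    have hkσ : (fun i => k i ^ 2 * σ i) =o[l] fun _ => (1 : ℝ) :=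
      (Asymptotics.isLittleO_one_iff ℝ).2
        (by simpa using (hk.pow 2).mul (hσ.trans_tendsto hδ))
    refine (Asymptotics.IsBigO.of_norm_eventuallyLE ?_).trans_isLittleO
      (by simpa using hkσ.mul_isBigO (hσ.pow 2))
    filter_upwards [hv, eventually_abs_mul_le_half hk (hσ.trans_tendsto hδ)] with i hvi hki
    exact (abs_fiberQuantile_sub_approx_le hki hvi).trans_eq (by ring)
  have hcurv : (fun i => (k i - k₀) * ((σ i ^ 2 - v i ^ 2) / 2)) =o[l] fun i => δ i ^ 2 := by
    have hk0 : (fun i => k i - k₀) =o[l] fun _ => (1 : ℝ) :=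
      (Asymptotics.isLittleO_one_iff ℝ).2 (by simpa using hk.sub_const k₀)
    simpa [div_eq_inv_mul] using
      hk0.mul_isBigO (((hσ.pow 2).sub (hvO.pow 2)).const_mul_left 2⁻¹)
  exact (hcubic.sub hcurv).congr_left fun i => by ring

end FiberAsymptotics

section Displacement

variable {E : Type*} [NormedAddCommGroup E] [InnerProductSpace ℝ E]

/-- The displacement between the points with equalized coordinates `(s, v)` in the boxes at `γ 0`
and `γ δ`: the transport vector of the coupling that upper-bounds the Wasserstein distance. -/
noncomputable def displacement (γ N : ℝ → E) (κ : ℝ → ℝ) (σ δ s v : ℝ) : E :=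
  equalizedChart γ N κ σ (δ + s, v) - equalizedChart γ N κ σ (s, v)

/-- The expansion up to `o(δ³)` of the length of `displacement`. The middle term is odd in `v`, so
it does not contribute to the mean. -/
noncomputable def displacementModel (γ N : ℝ → E) (κ : ℝ → ℝ) (σ δ s v : ℝ) : ℝ :=
  ‖γ δ - γ 0‖ + ⟪N (δ + s) - N s, chordDir γ δ⟫ * v + (σ ^ 2 - v ^ 2) / 2 * (δ * κ 0 ^ 2)

variable {γ T N : ℝ → E} {κ : ℝ → ℝ} {ι : Type*} {l : Filter ι} {δ s σ v x y : ι → ℝ}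

section CurveAndNormal

variable (hF : ∀ᶠ t in 𝓝 0, IsFrenetFrameAt γ T N κ t) (hδ : Tendsto δ l (𝓝[>] 0))

include hF hδ

theorem isBigO_chordDir_comp_sub_tangent : (fun i => chordDir γ (δ i) - T 0) =O[l] δ :=
  (isBigO_chordDir_sub_tangent hF).comp_tendsto hδ

theorem isBigO_chordDir_comp_one : (fun i => chordDir γ (δ i)) =O[l] fun _ => (1 : ℝ) :=
  .of_bound 1 ((hδ.eventually (eventually_norm_chordDir hF)).mono fun i hi => by simp [hi])

theorem isBigO_curve_sub_sub_chordDir (hx : x =O[l] δ) (hy : y =O[l] δ) :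
    (fun i => γ (y i) - γ (x i) - (y i - x i) • chordDir γ (δ i)) =O[l]
      fun i => δ i * (y i - x i) := by
  have htangent := isBigO_curve_sub_sub_tangent hF (tendsto_nhds_of_tendsto_nhdsWithin hδ) hx hy
  have hrotate := (Asymptotics.isBigO_refl (fun i => y i - x i) l).smul
    (isBigO_chordDir_comp_sub_tangent hF hδ)
  refine (htangent.sub (hrotate.congr_right fun i => mul_comm _ _)).congr_left fun i => ?_
  rw [smul_sub]
  abel

theorem isBigO_inner_curve_sub_sub_chordDir (hx : x =O[l] δ) (hy : y =O[l] δ) :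
    (fun i => ⟪γ (y i) - γ (x i), chordDir γ (δ i)⟫ - (y i - x i)) =O[l]
      fun i => δ i ^ 2 * (y i - x i) := by
  have hδ₀ := tendsto_nhds_of_tendsto_nhdsWithin hδ
  have hdir := isBigO_chordDir_comp_sub_tangent hF hδ
  have hcross := (isBigO_inner (isBigO_curve_sub_sub_tangent hF hδ₀ hx hy) hdir).congr_right
    (g₂ := fun i => δ i ^ 2 * (y i - x i)) fun i => by ring
  have htangent := isBigO_inner_curve_sub_sub_tangent hF hδ₀ hx hy
  have hdefect : (fun i => (y i - x i) * (⟪T 0, chordDir γ (δ i)⟫ - 1)) =O[l]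
      fun i => δ i ^ 2 * (y i - x i) := by
    have hsq := ((hdir.norm_left.pow 2).const_mul_left (-1 / 2)).mul
      (Asymptotics.isBigO_refl (fun i => y i - x i) l)
    refine hsq.congr' ((hδ.eventually (eventually_norm_chordDir hF)).mono fun i hi => ?_) .rfl
    beta_reduce
    rw [inner_sub_one_eq_neg_norm_sub_sq hF.self_of_nhds.norm_tangent hi, norm_sub_rev (T 0)]
    ring
  refine ((hcross.add htangent).add hdefect).congr_left fun i => ?_
  simp only [inner_sub_left, inner_sub_right, inner_smul_left, real_inner_self_eq_norm_sq,
    hF.self_of_nhds.norm_tangent, conj_trivial]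
  ring

variable (hs : s =o[l] δ)

include hs

theorem isLittleO_curve_increment_sub_chord :
    (fun i => γ (δ i + s i) - γ (s i) - (γ (δ i) - γ 0)) =o[l] fun i => δ i ^ 2 := by
  have hδO := Asymptotics.isBigO_refl δ l
  have hend := isBigO_curve_sub_sub_chordDir hF hδ hδO (hδO.add hs.isBigO)
  have hstart := isBigO_curve_sub_sub_chordDir hF hδ (Asymptotics.isBigO_zero δ l) hs.isBigO
  simp only [add_sub_cancel_left, sub_zero] at hend hstart
  refine ((hend.sub hstart).trans_isLittleO ?_).congr_left fun i => ?_
  · exact (hδO.mul_isLittleO hs).congr_right fun i => (sq _).symm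
  · abel

theorem isLittleO_inner_curve_increment_sub_chord :
    (fun i => ⟪γ (δ i + s i) - γ (s i), chordDir γ (δ i)⟫ - ‖γ (δ i) - γ 0‖) =o[l]
      fun i => δ i ^ 3 := by
  have hδO := Asymptotics.isBigO_refl δ l
  have hend := isBigO_inner_curve_sub_sub_chordDir hF hδ hδO (hδO.add hs.isBigO)
  have hstart := isBigO_inner_curve_sub_sub_chordDir hF hδ (Asymptotics.isBigO_zero δ l) hs.isBigO
  simp only [add_sub_cancel_left, sub_zero] at hend hstart
  have hchord : ∀ᶠ i in l, ⟪γ (δ i) - γ 0, chordDir γ (δ i)⟫ = ‖γ (δ i) - γ 0‖ := by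
    filter_upwards [hδ.eventually (eventually_norm_chordDir hF)] with i hi
    rw [← norm_smul_chordDir, inner_smul_left, real_inner_self_eq_norm_sq, norm_smul, norm_norm, hi]
    simp
  refine ((hend.sub hstart).trans_isLittleO ?_).congr' (hchord.mono fun i hi => ?_) .rfl
  · exact ((hδO.pow 2).mul_isLittleO hs).congr_right fun i => by ring
  · simp only [← hi, inner_sub_left]
    ring

variable (hκ : ContinuousAt κ 0)

include hκ

theorem isLittleO_normal_increment :
    (fun i => N (δ i + s i) - N (s i) + (δ i * κ 0) • chordDir γ (δ i)) =o[l] δ := by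
  have hδ₀ := tendsto_nhds_of_tendsto_nhdsWithin hδ
  have hs₀ := hs.isBigO.trans_tendsto hδ₀
  have hpair : Tendsto (fun i => (δ i + s i, s i)) l (𝓝 (0, 0)) := by
    simpa using (hδ₀.add hs₀).prodMk_nhds hs₀
  have hstrict := (hasStrictDerivAt_normal_of_eventually_isFrenetFrameAt hF
    hκ).hasStrictFDerivAt.isLittleO.comp_tendsto hpair
  simp only [Function.comp_def, add_sub_cancel_right] at hstrict
  have hrotate : (fun i => (δ i * κ 0) • (chordDir γ (δ i) - T 0)) =o[l] δ := by
    have hδδ : (fun i => δ i * δ i) =o[l] δ := by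
      simpa using (Asymptotics.isBigO_refl δ l).mul_isLittleO
        ((Asymptotics.isLittleO_one_iff ℝ).2 hδ₀)
    refine Asymptotics.IsBigO.trans_isLittleO ?_ hδδ
    exact ((Asymptotics.isBigO_refl δ l).mul (Asymptotics.isBigO_const_one ℝ (κ 0) l)).smul
      (isBigO_chordDir_comp_sub_tangent hF hδ) |>.congr_right fun i => by simp
  refine (hstrict.add hrotate).congr_left fun i => ?_
  simp [smul_sub, mul_smul]

theorem isLittleO_inner_normal_increment :
    (fun i => ⟪N (δ i + s i) - N (s i), chordDir γ (δ i)⟫ + δ i * κ 0) =o[l] δ := by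
  refine Asymptotics.IsLittleO.congr' (f₁ := fun i => ⟪N (δ i + s i) - N (s i) +
    (δ i * κ 0) • chordDir γ (δ i), chordDir γ (δ i)⟫) (g₁ := δ) ?_ ?_ .rfl
  · refine Asymptotics.IsBigO.trans_isLittleO ?_ (isLittleO_normal_increment hF hδ hs hκ).norm_left
    simpa using isBigO_inner ((Asymptotics.isBigO_refl _ l).norm_right)
      (isBigO_chordDir_comp_one hF hδ)
  · filter_upwards [hδ.eventually (eventually_norm_chordDir hF)] with i hi
    simp [inner_add_left, inner_smul_left, hi]

end CurveAndNormal

section Expansion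

variable (hF : ∀ᶠ t in 𝓝 0, IsFrenetFrameAt γ T N κ t) (hκ : ContinuousAt κ 0)
  (hδ : Tendsto δ l (𝓝[>] 0)) (hs : s =o[l] δ)

include hδ hs

theorem tendsto_add_of_isLittleO : Tendsto (fun i => δ i + s i) l (𝓝 0) := by
  have hδ₀ := tendsto_nhds_of_tendsto_nhdsWithin hδ
  simpa using hδ₀.add (hs.isBigO.trans_tendsto hδ₀)

include hF

theorem isBigO_normal_comp_one : (fun i => N (δ i + s i)) =O[l] fun _ => (1 : ℝ) :=
  .of_bound 1 (((tendsto_add_of_isLittleO hδ hs).eventually hF).mono fun i hi => by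
    simp [hi.norm_normal])

theorem isBigO_inner_normal_chordDir :
    (fun i => ⟪N (δ i + s i), chordDir γ (δ i)⟫) =O[l] δ := by
  have hN : (fun i => N (δ i + s i) - N 0) =O[l] δ := by
    have h := hF.self_of_nhds.hasDerivAt_normal.isBigO_sub.comp_tendsto
      (tendsto_add_of_isLittleO hδ hs)
    simp only [Function.comp_def, sub_zero] at h
    exact h.trans ((Asymptotics.isBigO_refl δ l).add hs.isBigO)
  have hturn := (isBigO_inner hN (isBigO_chordDir_comp_one hF hδ)).congr_right
    (g₂ := δ) fun i => mul_one _
  have hdir := (isBigO_inner (Asymptotics.isBigO_const_one ℝ (N 0) l)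
    (isBigO_chordDir_comp_sub_tangent hF hδ)).congr_right (g₂ := δ) fun i => one_mul _
  refine (hturn.add hdir).congr_left fun i => ?_
  rw [inner_sub_left, inner_sub_right, real_inner_comm (T 0),
    hF.self_of_nhds.inner_tangent_normal]
  ring

variable (hσ : σ =O[l] δ) (hv : ∀ᶠ i in l, |v i| < σ i)

include hκ hσ hv

theorem isLittleO_inner_displacement_sub_model :
    (fun i => ⟪displacement γ N κ (σ i) (δ i) (s i) (v i), chordDir γ (δ i)⟫ -
      displacementModel γ N κ (σ i) (δ i) (s i) (v i)) =o[l] fun i => δ i ^ 3 := by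
  have hδ₀ := tendsto_nhds_of_tendsto_nhdsWithin hδ
  have hκend := hκ.tendsto.comp (tendsto_add_of_isLittleO hδ hs)
  have hκstart := hκ.tendsto.comp (hs.isBigO.trans_tendsto hδ₀)
  have hturn := isLittleO_inner_normal_increment hF hδ hs hκ
  have hturnO : (fun i => ⟪N (δ i + s i) - N (s i), chordDir γ (δ i)⟫) =O[l] δ := by
    refine (hturn.isBigO.sub ((Asymptotics.isBigO_refl δ l).const_mul_left (κ 0))).congr_left
      fun i => ?_
    ring
  have hweight : (fun i => κ 0 * ((σ i ^ 2 - v i ^ 2) / 2)) =O[l] fun i => δ i ^ 2 := by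
    simpa only [div_eq_inv_mul] using (((hσ.pow 2).sub
      ((isBigO_of_eventually_abs_lt hv hσ).pow 2)).const_mul_left 2⁻¹).const_mul_left (κ 0)
  have hchord := isLittleO_inner_curve_increment_sub_chord hF hδ hs
  have hfiber : (fun i => (fiberQuantile (σ i) (κ (δ i + s i)) (v i) -
      fiberQuantile (σ i) (κ (s i)) (v i)) * ⟪N (δ i + s i), chordDir γ (δ i)⟫) =o[l]
        fun i => δ i ^ 3 :=
    ((isLittleO_fiberQuantile_sub hδ₀ hσ hv hκend hκstart).mul_isBigO
      (isBigO_inner_normal_chordDir hF hδ hs)).congr_right fun i => by ring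
  have hquantile := ((isLittleO_fiberQuantile_sub_approx hδ₀ hσ hv hκstart).mul_isBigO
    hturnO).congr_right (g₂ := fun i => δ i ^ 3) fun i => by ring
  have hcurv := (hweight.mul_isLittleO hturn).congr_right
    (g₂ := fun i => δ i ^ 3) fun i => by ring
  refine (((hchord.add hfiber).add hquantile).sub hcurv).congr_left fun i => ?_
  simp only [displacement, displacementModel, equalizedChart, fermiChart, inner_sub_left,
    inner_add_left, inner_smul_left, conj_trivial, Function.comp_apply]
  ring

theorem isLittleO_displacement_sub_smul_chordDir :
    (fun i => displacement γ N κ (σ i) (δ i) (s i) (v i) - (‖γ (δ i) - γ 0‖ -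
      δ i * κ 0 * fiberQuantile (σ i) (κ (s i)) (v i)) • chordDir γ (δ i)) =o[l]
        fun i => δ i ^ 2 := by
  have hδ₀ := tendsto_nhds_of_tendsto_nhdsWithin hδ
  have hκend := hκ.tendsto.comp (tendsto_add_of_isLittleO hδ hs)
  have hκstart := hκ.tendsto.comp (hs.isBigO.trans_tendsto hδ₀)
  have hchord := isLittleO_curve_increment_sub_chord hF hδ hs
  have hfiber := ((isLittleO_fiberQuantile_sub hδ₀ hσ hv hκend hκstart).smul_isBigO
    (isBigO_normal_comp_one hF hδ hs)).congr_right (g₂ := fun i => δ i ^ 2) fun i => by simp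
  have hturn := ((isBigO_fiberQuantile hδ₀ hσ hv hκstart).smul_isLittleO
    (isLittleO_normal_increment hF hδ hs hκ)).congr_right (g₂ := fun i => δ i ^ 2)
      fun i => by simp [sq]
  refine ((hchord.add hfiber).add hturn).congr_left fun i => ?_
  simp only [displacement, equalizedChart, fermiChart, Function.comp_apply]
  rw [sub_smul _ _ (chordDir γ (δ i)), norm_smul_chordDir]
  module

theorem isEquivalent_inner_displacement_chordDir :
    (fun i => ⟪displacement γ N κ (σ i) (δ i) (s i) (v i), chordDir γ (δ i)⟫) ~[l] δ := by
  have hδ₀ := tendsto_nhds_of_tendsto_nhdsWithin hδ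
  have hκstart := hκ.tendsto.comp (hs.isBigO.trans_tendsto hδ₀)
  have hδδ : (fun i => δ i * δ i) =o[l] δ := by
    simpa using (Asymptotics.isBigO_refl δ l).mul_isLittleO
      ((Asymptotics.isLittleO_one_iff ℝ).2 hδ₀)
  have hchord := ((isEquivalent_norm_chord hF).comp_tendsto hδ).isLittleO
  have htransverse := ((isBigO_inner
    (isLittleO_displacement_sub_smul_chordDir hF hκ hδ hs hσ hv).isBigO
    (isBigO_chordDir_comp_one hF hδ)).congr_right (g₂ := fun i => δ i * δ i)
      fun i => by ring).trans_isLittleO hδδ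
  have hfiber := ((((Asymptotics.isBigO_refl δ l).mul (isBigO_fiberQuantile hδ₀ hσ hv
    hκstart)).const_mul_left (κ 0))).trans_isLittleO hδδ
  refine ((htransverse.add hchord).sub hfiber).congr' ?_ .rfl
  filter_upwards [hδ.eventually (eventually_norm_chordDir hF)] with i hi
  simp only [inner_sub_left, inner_smul_left, real_inner_self_eq_norm_sq, hi, conj_trivial,
    Function.comp_apply, Pi.sub_apply]
  ring

theorem isLittleO_norm_sub_inner_displacement :
    (fun i => ‖displacement γ N κ (σ i) (δ i) (s i) (v i)‖ -
      ⟪displacement γ N κ (σ i) (δ i) (s i) (v i), chordDir γ (δ i)⟫) =o[l]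
        fun i => δ i ^ 3 := by
  have hpos : ∀ᶠ i in l, 0 < δ i := hδ.eventually self_mem_nhdsWithin
  have hequiv := isEquivalent_inner_displacement_chordDir hF hκ hδ hs hσ hv
  have htransverse := (isLittleO_displacement_sub_smul_chordDir hF hκ hδ hs hσ hv).norm_left.pow
    two_pos
  refine Asymptotics.IsBigO.trans_isLittleO (.of_norm_eventuallyLE ?_)
    ((htransverse.mul_isBigO hequiv.inv.isBigO).congr' .rfl ?_)
  · filter_upwards [hequiv.eventually_pos hpos, hδ.eventually (eventually_norm_chordDir hF)]
      with i hi hu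
    have hle := real_inner_le_norm (displacement γ N κ (σ i) (δ i) (s i) (v i)) (chordDir γ (δ i))
    rw [hu, mul_one] at hle
    rw [Real.norm_of_nonneg (sub_nonneg.2 hle)]
    exact (le_div_iff₀ hi).2 (norm_sub_inner_mul_inner_le hu _ _)
  · filter_upwards [hpos] with i hi
    simp only [Pi.inv_apply]
    field_simp

theorem isLittleO_norm_displacement_sub_model :
    (fun i => ‖displacement γ N κ (σ i) (δ i) (s i) (v i)‖ -
      displacementModel γ N κ (σ i) (δ i) (s i) (v i)) =o[l] fun i => δ i ^ 3 :=
  ((isLittleO_norm_sub_inner_displacement hF hκ hδ hs hσ hv).add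
    (isLittleO_inner_displacement_sub_model hF hκ hδ hs hσ hv)).congr_left fun i => by ring

end Expansion

-- A quantifier over all `|s| < ε δ` and `|v| < σ δ` is absorbed into the filter of triples
-- `(δ, s, v)`, so the pointwise asymptotics along an arbitrary filter are already uniform.
theorem eventually_forall_displacement_bounds {σ ε : ℝ → ℝ}
    (hF : ∀ᶠ t in 𝓝 0, IsFrenetFrameAt γ T N κ t) (hκ : ContinuousAt κ 0)
    (hσ : σ =O[𝓝[>] 0] fun δ => δ) (hε : ε =o[𝓝[>] 0] fun δ => δ) {η : ℝ} (hη : 0 < η) :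
    ∀ᶠ δ in 𝓝[>] 0, ∀ s v, |s| < ε δ → |v| < σ δ →
      displacementModel γ N κ (σ δ) δ s v - η * δ ^ 3 ≤
          ⟪displacement γ N κ (σ δ) δ s v, chordDir γ δ⟫ ∧
        ‖displacement γ N κ (σ δ) δ s v‖ ≤
          displacementModel γ N κ (σ δ) δ s v + η * δ ^ 3 := by
  let l : Filter (ℝ × ℝ × ℝ) := comap Prod.fst (𝓝[>] 0) ⊓
    𝓟 {p | |p.2.1| < ε p.1 ∧ |p.2.2| < σ p.1}
  have hδ : Tendsto Prod.fst l (𝓝[>] 0) := tendsto_comap.mono_left inf_le_left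
  have hbox : ∀ᶠ p in l, |p.2.1| < ε p.1 ∧ |p.2.2| < σ p.1 :=
    mem_inf_of_right (mem_principal_self _)
  have hs : (fun p : ℝ × ℝ × ℝ => p.2.1) =o[l] Prod.fst :=
    (Asymptotics.IsBigO.of_norm_eventuallyLE (hbox.mono fun _ hp => hp.1.le)).trans_isLittleO
      (hε.comp_tendsto hδ)
  have hσl : (fun p : ℝ × ℝ × ℝ => σ p.1) =O[l] Prod.fst := hσ.comp_tendsto hδ
  have hv : ∀ᶠ p : ℝ × ℝ × ℝ in l, |p.2.2| < σ p.1 := hbox.mono fun _ hp => hp.2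
  have hpos : ∀ᶠ p in l, 0 < p.1 := hδ.eventually self_mem_nhdsWithin
  have hbounds := ((isLittleO_inner_displacement_sub_model hF hκ hδ hs hσl hv).bound hη).and
    ((isLittleO_norm_displacement_sub_model hF hκ hδ hs hσl hv).bound hη) |>.and hpos
  filter_upwards [eventually_comap.1 (eventually_inf_principal.1 hbounds)] with δ hδ s v hs hv
  obtain ⟨⟨hinner, hnorm⟩, hδpos⟩ := hδ (δ, s, v) rfl ⟨hs, hv⟩
  rw [Real.norm_eq_abs, Real.norm_of_nonneg (by positivity), abs_le] at hinner hnorm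
  constructor <;> linarith [hinner.1, hnorm.2]

end Displacement

section WassersteinAsymptotics

section Localization

variable {ε σ : ℝ → ℝ}

theorem eventually_forall_mem_Icc_Ioo_subset {U : Set ℝ} (hU : U ∈ 𝓝 0)
    (hε : Tendsto ε (𝓝[>] 0) (𝓝 0)) :
    ∀ᶠ δ in 𝓝[>] 0, ∀ t ∈ Icc 0 δ, Ioo (t - ε δ) (t + ε δ) ⊆ U := by
  obtain ⟨ρ, hρ, hball⟩ := Metric.mem_nhds_iff.1 hU
  have hsum : Tendsto (fun δ => δ + ε δ) (𝓝[>] 0) (𝓝 0) := by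
    simpa using (tendsto_nhds_of_tendsto_nhdsWithin tendsto_id).add hε
  filter_upwards [hsum.eventually_lt_const hρ, self_mem_nhdsWithin] with δ hδ hpos t ht
  refine subset_trans (fun s hs => ?_) hball
  rw [Real.ball_eq_Ioo]
  constructor <;> linarith [hs.1, hs.2, ht.1, ht.2, mem_Ioi.1 hpos]

variable {E : Type*} [NormedAddCommGroup E] [InnerProductSpace ℝ E] {γ T N : ℝ → E} {κ : ℝ → ℝ}

theorem eventually_forall_mem_Icc_isRegularFermiBox (hF : ∀ᶠ t in 𝓝 0, IsFrenetFrameAt γ T N κ t)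
    (hκ : ContinuousAt κ 0) (hε : Tendsto ε (𝓝[>] 0) (𝓝 0)) (hσ : Tendsto σ (𝓝[>] 0) (𝓝 0)) :
    ∀ᶠ δ in 𝓝[>] 0, ∀ t ∈ Icc 0 δ, IsRegularFermiBox γ T N κ t (ε δ) (σ δ) := by
  obtain ⟨ρ, hρ, hinj⟩ := exists_injOn_fermiChart_fermiBox hF hκ
  have hρmem : Ioo (0 - ρ) (0 + ρ) ∈ 𝓝 0 := Ioo_mem_nhds (by simpa) (by simpa)
  have hκbound : ∀ᶠ s in 𝓝 0, |κ s| ≤ |κ 0| + 1 :=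
    hκ.tendsto.abs.eventually_le_const (lt_add_one _)
  have hκσ : Tendsto (fun δ => (|κ 0| + 1) * |σ δ|) (𝓝[>] 0) (𝓝 0) := by
    simpa using hσ.abs.const_mul (|κ 0| + 1)
  filter_upwards [eventually_forall_mem_Icc_Ioo_subset (hF.and hκbound) hε,
    eventually_forall_mem_Icc_Ioo_subset hρmem hε,
    hκσ.eventually_le_const one_half_pos, hσ.eventually_le_const hρ] with δ hU hIoo hδκ hδσ t ht
  refine ⟨fun s hs => (hU t ht hs).1, fun s hs => ?_, hinj.mono ?_⟩
  · calc |κ s| * σ δ ≤ |κ s| * |σ δ| := by gcongr; exact le_abs_self _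
      _ ≤ (|κ 0| + 1) * |σ δ| := by gcongr; exact (hU t ht hs).2
      _ ≤ 1 / 2 := hδκ
  · exact Set.prod_mono (hIoo t ht) (Ioo_subset_Ioo (neg_le_neg hδσ) hδσ)

end Localization

section Estimate

variable {E : Type*} [NormedAddCommGroup E] [InnerProductSpace ℝ E] {γ T N : ℝ → E} {κ : ℝ → ℝ}
  {t ε σ : ℝ}

theorem IsRegularFermiBox.integrable_equalizedChart [MeasurableSpace E] [BorelSpace E]
    [SecondCountableTopology E] (h : IsRegularFermiBox γ T N κ t ε σ) (hε : 0 < ε) (hσ : 0 < σ)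
    (hγ : Continuous γ) (hN : Measurable N) (hκ : Measurable κ) :
    Integrable (fun p => equalizedChart γ N κ σ ((t, 0) + p)) (normRestrict (fermiBox 0 ε σ)) := by
  have := isProbabilityMeasure_normRestrict_fermiBox (t := 0) hε hσ
  obtain ⟨C, hC⟩ := isCompact_Icc.exists_bound_of_continuousOn
    (hγ.continuousOn (s := Icc (t - ε) (t + ε)))
  refine .of_bound ((measurable_equalizedChart hγ.measurable hN hκ σ).comp
    (measurable_const_add _)).aestronglyMeasurable (C + σ) ?_
  filter_upwards [ae_mem_normRestrict (measurableSet_fermiBox 0 ε σ)] with ⟨s, v⟩ ⟨hs, hv⟩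
  have hts : t + s ∈ Ioo (t - ε) (t + ε) := by constructor <;> linarith [hs.1, hs.2]
  have hq := abs_fiberQuantile_lt (h.abs_curvature_mul_le _ hts) (abs_lt.2 hv)
  rw [Prod.mk_add_mk, zero_add, equalizedChart, fermiChart]
  refine (norm_add_le _ _).trans (add_le_add (hC _ (Ioo_subset_Icc_self hts)) ?_)
  rw [norm_smul, (h.isFrenetFrameAt _ hts).norm_normal, mul_one]
  exact hq.le

theorem integrableOn_inner_normal_increment [MeasurableSpace E] [BorelSpace E]
    [SecondCountableTopology E] {δ : ℝ} {u : E} (hu : ‖u‖ = 1)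
    (hstart : ∀ s ∈ Ioo (0 - ε) (0 + ε), IsFrenetFrameAt γ T N κ s)
    (hend : ∀ s ∈ Ioo (δ - ε) (δ + ε), IsFrenetFrameAt γ T N κ s) (hN : Measurable N) :
    IntegrableOn (fun s => ⟪N (δ + s) - N s, u⟫) (Ioo (0 - ε) (0 + ε)) := by
  refine Measure.integrableOn_of_bounded (M := 1 + 1) (by simp)
    (by fun_prop) ((ae_restrict_iff' measurableSet_Ioo).2 (.of_forall fun s hs => ?_))
  have hδs : δ + s ∈ Ioo (δ - ε) (δ + ε) := by constructor <;> linarith [hs.1, hs.2]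
  calc ‖⟪N (δ + s) - N s, u⟫‖ ≤ ‖N (δ + s) - N s‖ := by
        simpa [hu] using norm_inner_le_norm (𝕜 := ℝ) (N (δ + s) - N s) u
    _ ≤ ‖N (δ + s)‖ + ‖N s‖ := norm_sub_le _ _
    _ = 1 + 1 := by rw [(hend _ hδs).norm_normal, (hstart s hs).norm_normal]

end Estimate

variable {γ T N : ℝ → EuclideanSpace ℝ (Fin 2)} {κ : ℝ → ℝ}

theorem abs_W1_normRestrict_image_fermiChart_sub_le {δ ε σ η : ℝ} (hε : 0 < ε) (hσ : 0 < σ)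
    (hstart : IsRegularFermiBox γ T N κ 0 ε σ) (hend : IsRegularFermiBox γ T N κ δ ε σ)
    (hγ : Continuous γ) (hN : Measurable N) (hκ : Measurable κ) (hu : ‖chordDir γ δ‖ = 1)
    (hbounds : ∀ s v, |s| < ε → |v| < σ →
      displacementModel γ N κ σ δ s v - η ≤ ⟪displacement γ N κ σ δ s v, chordDir γ δ⟫ ∧
        ‖displacement γ N κ σ δ s v‖ ≤ displacementModel γ N κ σ δ s v + η) :
    |W1 (normRestrict (fermiChart γ N '' fermiBox 0 ε σ))
        (normRestrict (fermiChart γ N '' fermiBox δ ε σ)) -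
      (‖γ δ - γ 0‖ + σ ^ 2 / 3 * (δ * κ 0 ^ 2))| ≤ η := by
  have hchart (t : ℝ) : Measurable fun p => equalizedChart γ N κ σ ((t, 0) + p) :=
    (measurable_equalizedChart hγ.measurable hN hκ σ).comp (measurable_const_add _)
  have hb := integrableOn_inner_normal_increment hu hstart.isFrenetFrameAt hend.isFrenetFrameAt hN
  have hmodel : Integrable (fun p => displacementModel γ N κ σ δ p.1 p.2)
      (normRestrict (fermiBox 0 ε σ)) :=
    (integrable_fermiBox_quadratic hb _ _).smul_measure (by simp [volume_fermiBox, hε, hσ])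
  have hpointwise : ∀ᵐ p ∂normRestrict (fermiBox 0 ε σ),
      displacementModel γ N κ σ δ p.1 p.2 - η ≤
          ⟪equalizedChart γ N κ σ ((δ, 0) + p) - equalizedChart γ N κ σ ((0, 0) + p),
            chordDir γ δ⟫ ∧
        ‖equalizedChart γ N κ σ ((δ, 0) + p) - equalizedChart γ N κ σ ((0, 0) + p)‖ ≤
          displacementModel γ N κ σ δ p.1 p.2 + η := by
    filter_upwards [ae_mem_normRestrict (measurableSet_fermiBox 0 ε σ)] with ⟨s, v⟩ ⟨hs, hv⟩
    simpa [displacement] using hbounds s v (by simpa [abs_lt] using hs) (abs_lt.2 hv)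
  have := isProbabilityMeasure_normRestrict_fermiBox (t := 0) hε hσ
  rw [hstart.normRestrict_image_eq_map hγ.measurable hN hκ,
    hend.normRestrict_image_eq_map hγ.measurable hN hκ,
    ← integral_normRestrict_fermiBox_quadratic hε hσ hb]
  exact abs_W1_map_sub_integral_le (hchart 0) (hchart δ)
    (hstart.integrable_equalizedChart hε hσ hγ hN hκ)
    (hend.integrable_equalizedChart hε hσ hγ hN hκ) hu hmodel
    (hpointwise.mono fun _ hp => hp.1) (hpointwise.mono fun _ hp => hp.2)

theorem isLittleO_W1_sub {ε σ : ℝ → ℝ} (hF : ∀ᶠ t in 𝓝 0, IsFrenetFrameAt γ T N κ t)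
    (hκ₀ : ContinuousAt κ 0) (hγ : Continuous γ) (hN : Measurable N) (hκ : Measurable κ)
    (hε : ε =o[𝓝[>] 0] fun δ => δ) (hεpos : ∀ᶠ δ in 𝓝[>] 0, 0 < ε δ)
    (hσ : σ =O[𝓝[>] 0] fun δ => δ) (hσpos : ∀ᶠ δ in 𝓝[>] 0, 0 < σ δ) :
    (fun δ => W1 (normRestrict (fermiChart γ N '' fermiBox 0 (ε δ) (σ δ)))
        (normRestrict (fermiChart γ N '' fermiBox δ (ε δ) (σ δ))) -
      (‖γ δ - γ 0‖ + σ δ ^ 2 / 3 * (δ * κ 0 ^ 2))) =o[𝓝[>] 0] fun δ => δ ^ 3 := by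
  have hid : Tendsto (fun δ : ℝ => δ) (𝓝[>] 0) (𝓝 0) := nhdsWithin_le_nhds
  refine Asymptotics.isLittleO_iff.2 fun η hη => ?_
  filter_upwards [eventually_forall_mem_Icc_isRegularFermiBox hF hκ₀ (hε.isBigO.trans_tendsto hid)
      (hσ.trans_tendsto hid), eventually_forall_displacement_bounds hF hκ₀ hσ hε hη,
    hεpos, hσpos, eventually_norm_chordDir hF, self_mem_nhdsWithin]
    with δ hreg hbounds hεδ hσδ hu (hδ : 0 < δ)
  rw [Real.norm_eq_abs, Real.norm_of_nonneg (by positivity)]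
  exact abs_W1_normRestrict_image_fermiChart_sub_le hεδ hσδ (hreg 0 (left_mem_Icc.2 hδ.le))
    (hreg δ (right_mem_Icc.2 hδ.le)) hγ hN hκ hu hbounds

end WassersteinAsymptotics

section CurvatureRecovery

theorem tendsto_neg_three_div_sq_mul_one_sub_div {ι : Type*} {l : Filter ι} {δ d σ W : ι → ℝ}
    {K : ℝ} (hδ : ∀ᶠ i in l, δ i ≠ 0) (hd : d ~[l] δ) (hσ : δ =O[l] σ)
    (hW : (fun i => W i - (d i + σ i ^ 2 / 3 * (δ i * K))) =o[l] fun i => δ i ^ 3) :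
    Tendsto (fun i => -(3 / σ i ^ 2) * (1 - W i / d i)) l (𝓝 K) := by
  have hd₀ : ∀ᶠ i in l, d i ≠ 0 := by
    filter_upwards [hδ, hd.isBigO_symm.eq_zero_imp] with i hi hdi using mt hdi hi
  have hσ₀ : ∀ᶠ i in l, σ i ≠ 0 := by
    filter_upwards [hδ, hσ.eq_zero_imp] with i hi hσi using mt hσi hi
  have hratio : Tendsto (fun i => δ i / d i) l (𝓝 1) :=
    (Asymptotics.isEquivalent_iff_tendsto_one hd₀).1 hd.symm
  have herror : Tendsto (fun i => (W i - (d i + σ i ^ 2 / 3 * (δ i * K))) / (σ i ^ 2 * d i)) l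
      (𝓝 0) :=
    (hW.trans_isBigO (((hσ.pow 2).mul hd.isBigO_symm).congr_left fun i => by
      ring)).tendsto_div_nhds_zero
  have hlim := (hratio.const_mul K).add (herror.const_mul 3)
  rw [mul_one, mul_zero, add_zero] at hlim
  refine hlim.congr' ?_
  filter_upwards [hd₀, hσ₀] with i hdi hσi
  field_simp
  ring

theorem tendsto_rescaled_W1_of_eventually_isFrenetFrameAt
    {γ T N : ℝ → EuclideanSpace ℝ (Fin 2)} {κ ε σ : ℝ → ℝ}
    (hF : ∀ᶠ t in 𝓝 0, IsFrenetFrameAt γ T N κ t) (hκ₀ : ContinuousAt κ 0)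
    (hγ : Continuous γ) (hN : Measurable N) (hκ : Measurable κ)
    (hε : ε =o[𝓝[>] 0] fun δ => δ) (hεpos : ∀ᶠ δ in 𝓝[>] 0, 0 < ε δ)
    (hσ : σ =Θ[𝓝[>] 0] fun δ => δ) (hσpos : ∀ᶠ δ in 𝓝[>] 0, 0 < σ δ) :
    Tendsto (fun δ => -(3 / σ δ ^ 2) *
        (1 - W1 (normRestrict (fermiChart γ N '' fermiBox 0 (ε δ) (σ δ)))
          (normRestrict (fermiChart γ N '' fermiBox δ (ε δ) (σ δ))) / ‖γ δ - γ 0‖))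
      (𝓝[>] 0) (𝓝 (κ 0 ^ 2)) :=
  tendsto_neg_three_div_sq_mul_one_sub_div
    (eventually_mem_nhdsWithin.mono fun _ hδ => (mem_Ioi.1 hδ).ne') (isEquivalent_norm_chord hF)
    hσ.isBigO_symm (isLittleO_W1_sub hF hκ₀ hγ hN hκ hε hεpos hσ.isBigO hσpos)

end CurvatureRecovery

section UnitVectorField

variable {E : Type*} [NormedAddCommGroup E] [InnerProductSpace ℝ E] {T : ℝ → E} {T' : E} {t : ℝ}

theorem inner_eq_zero_of_hasDerivAt_of_norm_eq_one (hT : HasDerivAt T T' t)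
    (hunit : ∀ s, ‖T s‖ = 1) : ⟪T t, T'⟫ = 0 := by
  have h := hT.norm_sq
  simp only [hunit] at h
  linarith [h.unique (hasDerivAt_const t _)]

theorem norm_eq_one_and_inner_eq_zero_of_hasDerivAt (hT : HasDerivAt T T' t)
    (hunit : ∀ s, ‖T s‖ = 1) (hT' : T' ≠ 0) :
    ‖‖T'‖⁻¹ • T'‖ = 1 ∧ ⟪T t, ‖T'‖⁻¹ • T'⟫ = 0 :=
  ⟨norm_smul_inv_norm hT', by
    rw [inner_smul_right, inner_eq_zero_of_hasDerivAt_of_norm_eq_one hT hunit, mul_zero]⟩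

end UnitVectorField

section PlanarFrame

variable {E : Type*} [NormedAddCommGroup E] [InnerProductSpace ℝ E]
  [Fact (Module.finrank ℝ E = 2)] (o : Orientation ℝ E (Fin 2))

theorem eq_inner_smul_rightAngleRotation {e x : E} (he : ‖e‖ = 1) (hx : ⟪e, x⟫ = 0) :
    x = ⟪x, o.rightAngleRotation e⟫ • o.rightAngleRotation e := by
  refine ext_inner_right ℝ fun y => ?_
  have h := o.inner_mul_inner_add_areaForm_mul_areaForm e x y
  rw [hx, he, zero_mul, zero_add, one_pow, one_mul] at h
  rw [inner_smul_left, conj_trivial, o.inner_rightAngleRotation_right,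
    o.inner_rightAngleRotation_left, ← o.areaForm_swap, h]

theorem norm_eq_abs_inner_rightAngleRotation {e x : E} (he : ‖e‖ = 1) (hx : ⟪e, x⟫ = 0) :
    ‖x‖ = |⟪x, o.rightAngleRotation e⟫| := by
  conv_lhs => rw [eq_inner_smul_rightAngleRotation o he hx]
  rw [norm_smul, LinearIsometryEquiv.norm_map, he, mul_one, Real.norm_eq_abs]

theorem eq_rightAngleRotation_or_eq_neg {e x : E} (he : ‖e‖ = 1) (hx : ‖x‖ = 1)
    (hex : ⟪e, x⟫ = 0) : x = o.rightAngleRotation e ∨ x = -o.rightAngleRotation e := by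
  have hdecomp := eq_inner_smul_rightAngleRotation o he hex
  have hcoeff : |⟪x, o.rightAngleRotation e⟫| = 1 :=
    (norm_eq_abs_inner_rightAngleRotation o he hex).symm.trans hx
  rcases eq_or_eq_neg_of_abs_eq hcoeff with h | h
  · left; rwa [h, one_smul] at hdecomp
  · right; rwa [h, neg_one_smul] at hdecomp

theorem isFrenetFrameAt_rightAngleRotation {γ T T' : ℝ → E} {t : ℝ}
    (hγ : HasDerivAt γ (T t) t) (hT : HasDerivAt T (T' t) t) (hunit : ∀ s, ‖T s‖ = 1) :
    IsFrenetFrameAt γ T (fun s => o.rightAngleRotation (T s))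
      (fun s => ⟪T' s, o.rightAngleRotation (T s)⟫) t := by
  have hT' := eq_inner_smul_rightAngleRotation o (hunit t)
    (inner_eq_zero_of_hasDerivAt_of_norm_eq_one hT hunit)
  refine ⟨hγ, hT.congr_deriv hT', ?_, hunit t, by simpa using hunit t, by simp⟩
  refine (o.rightAngleRotation.toContinuousLinearEquiv.hasFDerivAt.comp_hasDerivAt t
    hT).congr_deriv ?_
  nth_rewrite 1 [hT']
  simp

end PlanarFrame

section NormalSign

variable {E : Type*} [NormedAddCommGroup E] [InnerProductSpace ℝ E] {γ N n : ℝ → E} {t ε σ : ℝ}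

theorem image_fermiChart_subset_of_eq_or_eq_neg
    (h : ∀ s ∈ Ioo (t - ε) (t + ε), n s = N s ∨ n s = -N s) :
    fermiChart γ n '' fermiBox t ε σ ⊆ fermiChart γ N '' fermiBox t ε σ := by
  rintro _ ⟨⟨s, β⟩, ⟨hs, hβ⟩, rfl⟩
  rcases h s hs with hns | hns
  · exact ⟨(s, β), ⟨hs, hβ⟩, by simp [fermiChart, hns]⟩
  · exact ⟨(s, -β), ⟨hs, neg_lt_neg hβ.2, neg_lt.1 hβ.1⟩, by simp [fermiChart, hns]⟩

theorem image_fermiChart_eq_of_eq_or_eq_neg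
    (h : ∀ s ∈ Ioo (t - ε) (t + ε), n s = N s ∨ n s = -N s) :
    fermiChart γ n '' fermiBox t ε σ = fermiChart γ N '' fermiBox t ε σ :=
  (image_fermiChart_subset_of_eq_or_eq_neg h).antisymm <|
    image_fermiChart_subset_of_eq_or_eq_neg fun s hs =>
      (h s hs).imp Eq.symm fun hns => (neg_eq_iff_eq_neg.2 hns).symm

end NormalSign

theorem isTheta_of_eventually_mul_le_and_le_mul {ι : Type*} {l : Filter ι} {f g : ι → ℝ} {c C : ℝ}
    (hc : 0 < c) (hg : ∀ᶠ i in l, 0 ≤ g i) (h : ∀ᶠ i in l, c * g i ≤ f i ∧ f i ≤ C * g i) :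
    f =Θ[l] g := by
  refine ⟨.of_bound C ?_, .of_bound c⁻¹ ?_⟩ <;> filter_upwards [hg, h] with i hgi hfi
  all_goals
    have hfi₀ : 0 ≤ f i := (mul_nonneg hc.le hgi).trans hfi.1
    rw [Real.norm_of_nonneg hgi, Real.norm_of_nonneg hfi₀]
  · exact hfi.2
  · exact (le_inv_mul_iff₀ hc).2 hfi.1

theorem planar_curve_regime_sigma_general
    {γ n : ℝ → EuclideanSpace ℝ (Fin 2)} (hγ : ContDiff ℝ 2 γ) (hunit : ∀ α, ‖deriv γ α‖ = 1)
    (hn : ∀ᶠ α in 𝓝 0, ‖n α‖ = 1 ∧ ⟪deriv γ α, n α⟫ = 0) {σ ε : ℝ → ℝ}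
    (hσpos : ∀ᶠ δ in 𝓝[>] 0, 0 < σ δ) (hεpos : ∀ᶠ δ in 𝓝[>] 0, 0 < ε δ)
    (hσ : σ =Θ[𝓝[>] 0] fun δ => δ) (hε : ε =o[𝓝[>] 0] fun δ => δ) :
    Tendsto (fun δ => -(3 / σ δ ^ 2) *
        (1 - W1 (normRestrict (fermiChart γ n '' fermiBox 0 (ε δ) (σ δ)))
          (normRestrict (fermiChart γ n '' fermiBox δ (ε δ) (σ δ))) / ‖γ δ - γ 0‖))
      (𝓝[>] 0) (𝓝 (‖deriv (deriv γ) 0‖ ^ 2)) := by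
  have : Fact (Module.finrank ℝ (EuclideanSpace ℝ (Fin 2)) = 2) := ⟨finrank_euclideanSpace_fin⟩
  let o := (EuclideanSpace.basisFun (Fin 2) ℝ).toBasis.orientation
  have hγ' : ContDiff ℝ 1 (deriv γ) := hγ.deriv'
  have hT (t : ℝ) : HasDerivAt (deriv γ) (deriv (deriv γ) t) t :=
    (hγ.differentiable_deriv_two t).hasDerivAt
  have hF (t : ℝ) := isFrenetFrameAt_rightAngleRotation o
    (hγ.differentiable two_ne_zero t).hasDerivAt (hT t) hunit
  have hN : Continuous fun t => o.rightAngleRotation (deriv γ t) :=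
    o.rightAngleRotation.continuous.comp hγ'.continuous
  have hκ := hγ'.continuous_deriv_one.inner (𝕜 := ℝ) hN
  have hlim := tendsto_rescaled_W1_of_eventually_isFrenetFrameAt (.of_forall hF) hκ.continuousAt
    hγ.continuous hN.measurable hκ.measurable hε hεpos hσ hσpos
  rw [← sq_abs, ← norm_eq_abs_inner_rightAngleRotation o (hunit 0)
    (inner_eq_zero_of_hasDerivAt_of_norm_eq_one (hT 0) hunit)] at hlim
  refine hlim.congr' ?_
  have hsign := hn.mono fun s hs => eq_rightAngleRotation_or_eq_neg o (hunit s) hs.1 hs.2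
  filter_upwards [self_mem_nhdsWithin, eventually_forall_mem_Icc_Ioo_subset hsign
    (hε.trans_tendsto (tendsto_id.mono_left nhdsWithin_le_nhds))] with δ (hδpos : 0 < δ) hδ
  have himage {t : ℝ} (ht : t ∈ Icc 0 δ) :
      fermiChart γ n '' fermiBox t (ε δ) (σ δ) = fermiChart γ _ '' fermiBox t (ε δ) (σ δ) :=
    image_fermiChart_eq_of_eq_or_eq_neg (hδ t ht)
  rw [himage (left_mem_Icc.2 hδpos.le), himage (right_mem_Icc.2 hδpos.le)]

/-- Regime `σ = Θ(δ)`, `ε = o(δ)`: the rescaled coarse extrinsic curvature of a planar curve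
recovers `1/R²`. -/
theorem planar_curve_regime_sigma
    (δ₀ : ℝ) (hδ₀ : 0 < δ₀)
    (γ : ℝ → EuclideanSpace ℝ (Fin 2)) (hγ : ContDiff ℝ (⊤ : ℕ∞) γ)
    (hunit : ∀ α : ℝ, ‖deriv γ α‖ = 1)
    (hcurv : ∀ α ∈ Icc (-δ₀) (2 * δ₀), deriv (deriv γ) α ≠ 0)
    (R : ℝ → ℝ) (hR : ∀ α : ℝ, R α = ‖deriv (deriv γ) α‖⁻¹)
    (n : ℝ → EuclideanSpace ℝ (Fin 2)) (hn : ∀ α : ℝ, n α = R α • deriv (deriv γ) α)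
    (φ : ℝ × ℝ → EuclideanSpace ℝ (Fin 2)) (hφ : ∀ p : ℝ × ℝ, φ p = γ p.1 + p.2 • n p.1)
    (hinj : InjOn φ (Icc (-δ₀) (2 * δ₀) ×ˢ Icc (-δ₀) δ₀))
    (hreach : ∀ α ∈ Icc (-δ₀) (2 * δ₀), δ₀ < R α)
    (μ : ℝ → ℝ → ℝ → Measure (EuclideanSpace ℝ (Fin 2)))
    (hμ : ∀ t σ ε : ℝ, μ t σ ε = normRestrict (φ '' (Ioo (t - ε) (t + ε) ×ˢ Ioo (-σ) σ)))
    (σf εf : ℝ → ℝ)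
    (hpos : ∀ δ ∈ Ioc (0:ℝ) δ₀, 0 < σf δ ∧ 0 < εf δ ∧ max (σf δ) (εf δ) ≤ δ / 4)
    (c C' : ℝ) (hc : 0 < c) (hC' : 0 < C')
    (hΘ : ∀ δ ∈ Ioc (0:ℝ) δ₀, c * δ ≤ σf δ ∧ σf δ ≤ C' * δ)
    (ho : Tendsto (fun δ => εf δ / δ) (nhdsWithin 0 (Ioi 0)) (nhds 0)) :
    Tendsto (fun δ => -(3 / σf δ ^ 2) *
        (1 - W1 (μ 0 (σf δ) (εf δ)) (μ δ (σf δ) (εf δ)) / ‖γ 0 - γ δ‖))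
      (nhdsWithin 0 (Ioi 0)) (nhds (1 / R 0 ^ 2)) := by
  have hmem : Icc (-δ₀) (2 * δ₀) ∈ 𝓝 0 := Icc_mem_nhds (by linarith) (by linarith)
  have hγ₂ : ContDiff ℝ 2 γ := hγ.of_le (by norm_cast)
  have hnormal : ∀ᶠ α in 𝓝 0, ‖n α‖ = 1 ∧ ⟪deriv γ α, n α⟫ = 0 := by
    filter_upwards [hmem] with α hα
    rw [hn, hR]
    exact norm_eq_one_and_inner_eq_zero_of_hasDerivAt
      (hγ₂.differentiable_deriv_two α).hasDerivAt hunit (hcurv α hα)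
  have hIoc : ∀ᶠ δ in 𝓝[>] 0, δ ∈ Ioc 0 δ₀ := Ioc_mem_nhdsGT hδ₀
  have hσ : σf =Θ[𝓝[>] 0] fun δ => δ :=
    isTheta_of_eventually_mul_le_and_le_mul hc (hIoc.mono fun δ hδ => hδ.1.le) (hIoc.mono hΘ)
  have hε : εf =o[𝓝[>] 0] fun δ => δ :=
    (Asymptotics.isLittleO_iff_tendsto' (hIoc.mono fun δ hδ h => absurd h hδ.1.ne')).2 ho
  obtain rfl : φ = fermiChart γ n := funext hφ
  simpa only [hμ, hR, fermiBox, norm_sub_rev, one_div, inv_pow, inv_inv] using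
    planar_curve_regime_sigma_general hγ₂ hunit hnormal
      (hIoc.mono fun δ hδ => (hpos δ hδ).1) (hIoc.mono fun δ hδ => (hpos δ hδ).2.1) hσ hε
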